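/- Let d ≥ 3 and ε ∈ (0,1), fix 1 ≤ r_N ≤ N^{1−ε}, and let A = B(0,r_N) and B = B(0,N^{1−ε/2}) in T. For any nonempty V ⊆ A define f_V(x) = 1 − E_x[H_V]/E[H_V]. There exist constants c, c′ > 0 depending only on d and ε such that for all N ≥ 2: inf_{x∈T} f_V(x) ≥ −c N^{−c′} and sup_{x ∈ T∖B} |f_V(x)| ≤ c N^{−c′}. -/

import Mathlib

open MeasureTheory Filter Classical
open scoped ENNReal NNReal

noncomputable section

namespace Frag

/-! ### Graph-theoretic basics -/

/-- Two vertices of `Fin d → R` are adjacent if they differ in exactly one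
coordinate, by `±1` (Euclidean distance one). -/
def adj {d : ℕ} {R : Type*} [AddGroupWithOne R] (x y : Fin d → R) : Prop :=
  x ≠ y ∧ ∃ i : Fin d, (y i = x i + 1 ∨ x i = y i + 1) ∧ ∀ j : Fin d, j ≠ i → x j = y j

/-- The discrete torus `(ℤ/Nℤ)^d`. -/
abbrev Torus (d N : ℕ) := Fin d → ZMod N

/-- The lattice `ℤ^d`. -/
abbrev Lat (d : ℕ) := Fin d → ℤ

instance (n : ℕ) : MeasurableSpace (ZMod n) := ⊤

/-- The `ℓ∞`-distance on the torus. -/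
def torusDist {d N : ℕ} (x y : Torus d N) : ℕ :=
  Finset.univ.sup fun i : Fin d => min (x i - y i).val (y i - x i).val

/-- The `ℓ∞`-distance on the lattice. -/
def latDist {d : ℕ} (x y : Lat d) : ℕ :=
  Finset.univ.sup fun i : Fin d => (x i - y i).natAbs

/-- Closed `ℓ∞`-ball in the torus. -/
def torusBall {d N : ℕ} (x : Torus d N) (r : ℝ) : Set (Torus d N) :=
  {y | (torusDist x y : ℝ) ≤ r}

/-- Closed `ℓ∞`-ball in the lattice. -/
def latBall {d : ℕ} (x : Lat d) (r : ℝ) : Set (Lat d) :=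
  {y | (latDist x y : ℝ) ≤ r}

/-- `x` and `y` are connected by a nearest-neighbour path staying in `S`. -/
def connectedIn {α : Type*} (rel : α → α → Prop) (S : Set α) (x y : α) : Prop :=
  ∃ (n : ℕ) (p : ℕ → α), p 0 = x ∧ p n = y ∧ (∀ k, k ≤ n → p k ∈ S) ∧
    ∀ k, k < n → rel (p k) (p (k + 1))

/-- The connected component of `x` inside `S`. -/
def compOf {α : Type*} (rel : α → α → Prop) (S : Set α) (x : α) : Set α :=
  {y | connectedIn rel S x y}

/-- `S` is a connected set. -/
def IsConnSet {α : Type*} (rel : α → α → Prop) (S : Set α) : Prop :=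
  ∀ x ∈ S, ∀ y ∈ S, connectedIn rel S x y

/-- External vertex boundary. -/
def extBdry {α : Type*} (rel : α → α → Prop) (S : Set α) : Set α :=
  {y | y ∉ S ∧ ∃ x ∈ S, rel x y}

/-- Internal vertex boundary. -/
def intBdry {α : Type*} (rel : α → α → Prop) (S : Set α) : Set α :=
  {x | x ∈ S ∧ ∃ y, y ∉ S ∧ rel x y}

/-- The cardinality of the largest connected component of `S`. -/
def maxCompSize {α : Type*} (rel : α → α → Prop) (S : Set α) : ℕ :=
  sSup {n | ∃ x ∈ S, n = (compOf rel S x).ncard}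

/-- The diameter of a set with respect to a distance. -/
def diamOf {α : Type*} (dist : α → α → ℕ) (S : Set α) : ℕ :=
  sSup {n | ∃ x ∈ S, ∃ y ∈ S, n = dist x y}

/-- The canonical graph isomorphism `φ` from `B(0, N/4) ⊆ (ℤ/Nℤ)^d` onto
`B(0, N/4) ⊆ ℤ^d`, given by the signed representative of each coordinate. -/
def torusToLat {d N : ℕ} (x : Torus d N) : Lat d :=
  fun i => if ((x i).val : ℝ) ≤ (N : ℝ) / 2 then ((x i).val : ℤ) else ((x i).val : ℤ) - (N : ℤ)

/-! ### Discrete-time simple random walk -/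

/-- One-step transition probability of the simple random walk. -/
def srwStep {d : ℕ} {R : Type*} [AddGroupWithOne R] (x y : Fin d → R) : ℝ≥0∞ :=
  if adj x y then ((2 * d : ℕ) : ℝ≥0∞)⁻¹ else 0

/-- `μ` is the law on path space of the discrete-time simple random walk with
initial distribution `init`, characterized by its cylinder probabilities. -/
def IsWalkLaw {d : ℕ} {R : Type*} [AddGroupWithOne R] [MeasurableSpace R]
    (μ : Measure (ℕ → (Fin d → R))) (init : (Fin d → R) → ℝ≥0∞) : Prop :=
  IsProbabilityMeasure μ ∧
  ∀ (n : ℕ) (w : ℕ → (Fin d → R)),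
    μ {ω | ∀ k, k ≤ n → ω k = w k} =
      init (w 0) * ∏ k ∈ Finset.range n, srwStep (w k) (w (k + 1))

/-- The uniform initial distribution on the torus. -/
def unifInit (d N : ℕ) : Torus d N → ℝ≥0∞ := fun _ => ((N : ℝ≥0∞) ^ d)⁻¹

/-- The initial distribution concentrated at `x`. -/
def pointInit {α : Type*} (x : α) : α → ℝ≥0∞ := fun y => if y = x then 1 else 0

/-- The set of sites visited in the first `t` steps. -/
def visited {α : Type*} (t : ℕ) (ω : ℕ → α) : Set α := {v | ∃ k, k ≤ t ∧ ω k = v}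

/-! ### Capacity and random interlacements on `ℤ^d` -/

/-- The event that the walk never returns to `V` after time `0`. -/
def escEvent {d : ℕ} (V : Set (Lat d)) : Set (ℕ → Lat d) :=
  {w | ∀ n, 1 ≤ n → w n ∉ V}

/-- `r` is the (simple random walk) capacity of `V ⊆ ℤ^d`:
`r = Σ_{x ∈ V} P_x[H̃_V = ∞]`. -/
def IsCap (d : ℕ) (V : Set (Lat d)) (r : ℝ) : Prop :=
  ∃ μ : Lat d → Measure (ℕ → Lat d),
    (∀ x, IsWalkLaw (μ x) (pointInit x)) ∧
    r = ∑ᶠ x ∈ V, ((μ x) (escEvent V)).toReal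

/-- `I` is a random interlacement at level `u` on the probability space `(Ω, P)`:
for every finite `V ⊆ ℤ^d`, `P[I ∩ V = ∅] = exp (−u · cap V)`. -/
def IsInterlacement (d : ℕ) (u : ℝ) {Ω : Type*} [MeasurableSpace Ω]
    (P : Measure Ω) (I : Ω → Set (Lat d)) : Prop :=
  IsProbabilityMeasure P ∧
  (∀ x : Lat d, MeasurableSet {ω | x ∈ I ω}) ∧
  ∀ V : Set (Lat d), V.Finite → ∀ r : ℝ, IsCap d V r →
    P {ω | ∀ x ∈ V, x ∉ I ω} = ENNReal.ofReal (Real.exp (-u * r))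

/-- `e = η(u)`, the probability that the origin lies in an infinite component of
the vacant set `V^u = ℤ^d ∖ I^u` of a random interlacement at level `u`. -/
def IsEta (d : ℕ) (u e : ℝ) : Prop :=
  ∃ (Ω : Type) (_ : MeasurableSpace Ω) (P : Measure Ω) (I : Ω → Set (Lat d)),
    IsInterlacement d u P I ∧
    e = (P {ω | (compOf adj ((I ω)ᶜ) (0 : Lat d)).Infinite}).toReal

/-- The critical level `u_* = inf {u ≥ 0 : η(u) = 0}`. -/
def uStar (d : ℕ) : ℝ := sInf {u | 0 ≤ u ∧ IsEta d u 0}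

/-- The probability of an event `E` about a random interlacement at level `u`. -/
def intProb (d : ℕ) (u : ℝ) (E : Set (Lat d) → Prop) : ℝ :=
  sSup {p | ∃ (Ω : Type) (_ : MeasurableSpace Ω) (P : Measure Ω) (I : Ω → Set (Lat d)),
    IsInterlacement d u P I ∧ p = (P {ω | E (I ω)}).toReal}

/-- The event that `B(0,L)` is connected to the external boundary of `B(0,2L)`
by a nearest-neighbour path in `S`. -/
def connAcross (d L : ℕ) (S : Set (Lat d)) : Prop :=
  ∃ x ∈ latBall (0 : Lat d) (L : ℝ), ∃ y ∈ extBdry adj (latBall (0 : Lat d) (2 * (L : ℝ))),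
    connectedIn adj S x y

/-- The critical level `u_** = inf {u ≥ 0 : α(u) > 0}`. -/
def uStarStar (d : ℕ) : ℝ :=
  sInf {u | 0 ≤ u ∧ ∃ a : ℝ, 0 < a ∧
    Tendsto (fun L : ℕ => (L : ℝ) ^ a * intProb d u fun I => connAcross d L Iᶜ)
      atTop (nhds 0)}

/-- `u` is a strongly supercritical level for random interlacements on `ℤ^d`. -/
def StronglySupercritical (d : ℕ) (u : ℝ) : Prop :=
  ∃ μ : ℝ, 0 < μ ∧
  ∃ (Ω : Type) (_ : MeasurableSpace Ω) (P : Measure Ω) (I : ℝ → Ω → Set (Lat d)),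
    (∀ v : ℝ, 0 ≤ v → IsInterlacement d v P (I v)) ∧
    (∀ v v' : ℝ, v ≤ v' → ∀ ω, I v ω ⊆ I v' ω) ∧
    ∃ N₀ : ℕ, ∀ N : ℕ, N₀ ≤ N →
      (1 - Real.exp (-(N : ℝ) ^ μ) ≤
        (P {ω | ∃ x ∈ latBall (0 : Lat d) (N : ℝ),
          (compOf adj ((I (u * (1 + μ)) ω)ᶜ) x).Infinite}).toReal) ∧
      (1 - Real.exp (-(N : ℝ) ^ μ) ≤
        (P {ω | ∀ S₁ S₂ : Set (Lat d),
            S₁ ⊆ (I (u * (1 - μ)) ω)ᶜ ∩ latBall 0 (N : ℝ) →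
            S₂ ⊆ (I (u * (1 - μ)) ω)ᶜ ∩ latBall 0 (N : ℝ) →
            IsConnSet adj S₁ → IsConnSet adj S₂ →
            (N : ℝ) / 8 ≤ (diamOf latDist S₁ : ℝ) →
            (N : ℝ) / 8 ≤ (diamOf latDist S₂ : ℝ) →
            ∃ x ∈ S₁, ∃ y ∈ S₂,
              connectedIn adj ((I (u * (1 + μ)) ω)ᶜ ∩ latBall 0 (2 * (N : ℝ))) x y}).toReal)

/-! ### Continuous-time walk -/

/-- Sample space for the continuous-time walk: a discrete path together with
the i.i.d. exponential interarrival gaps of the driving Poisson process. -/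
abbrev CTPath (d N : ℕ) := (ℕ → Torus d N) × (ℕ → ℝ)

/-- The number of jumps performed up to time `t`. -/
def nJumps (g : ℕ → ℝ) (t : ℝ) : ℕ := sSup {n | ∑ k ∈ Finset.range n, g k ≤ t}

/-- The position of the continuous-time walk at time `t`. -/
def ctPos {d N : ℕ} (ω : CTPath d N) (t : ℝ) : Torus d N := ω.1 (nJumps ω.2 t)

/-- `ν` is the law of an i.i.d. sequence of exponential random variables of
parameter `1`, characterized by its joint survival function. -/
def IsIIDExp (ν : Measure (ℕ → ℝ)) : Prop :=
  IsProbabilityMeasure ν ∧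
  ∀ (n : ℕ) (s : ℕ → ℝ), (∀ k, 0 ≤ s k) →
    ν {g | ∀ k, k ≤ n → s k < g k} =
      ENNReal.ofReal (Real.exp (-(∑ k ∈ Finset.range (n + 1), s k)))

/-- `P` is the law of the continuous-time simple random walk `Y_t = X_{N_t}`
with initial distribution `init`. -/
def IsCTWalk {d N : ℕ} (P : Measure (CTPath d N)) (init : Torus d N → ℝ≥0∞) : Prop :=
  ∃ (μ : Measure (ℕ → Torus d N)) (ν : Measure (ℕ → ℝ)),
    IsWalkLaw μ init ∧ IsIIDExp ν ∧ P = μ.prod ν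

/-- The entrance time `H_V = inf {t ≥ 0 : Y_t ∈ V}`. -/
def hitT {d N : ℕ} (V : Set (Torus d N)) (ω : CTPath d N) : ℝ :=
  sInf {t | 0 ≤ t ∧ ctPos ω t ∈ V}

/-- The entrance time to `V` after time `s`. -/
def hitTAfter {d N : ℕ} (V : Set (Torus d N)) (ω : CTPath d N) (s : ℝ) : ℝ :=
  sInf {t | s ≤ t ∧ ctPos ω t ∈ V}

/-- The exit time `T_V = inf {t ≥ 0 : Y_t ∉ V}`. -/
def exitT {d N : ℕ} (V : Set (Torus d N)) (ω : CTPath d N) : ℝ :=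
  sInf {t | 0 ≤ t ∧ ctPos ω t ∉ V}

/-- The regeneration time `t_* = (N log N)^2`. -/
def tstar (N : ℕ) : ℝ := ((N : ℝ) * Real.log N) ^ 2

/-- The first time `t ≥ s + t_*` such that the walk has avoided `B` during the
whole interval `[t − t_*, t]`. -/
def uEndAfter {d N : ℕ} (B : Set (Torus d N)) (ω : CTPath d N) (s : ℝ) : ℝ :=
  sInf {t | s + tstar N ≤ t ∧ ∀ r, t - tstar N ≤ r → r ≤ t → ctPos ω r ∉ B}

/-- The successive excursion times `(R_k, U_k)` between `A` and (long absences
from) `B`, with the convention `(R_0, U_0) = (0, 0)`. -/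
def excTimes {d N : ℕ} (A B : Set (Torus d N)) (ω : CTPath d N) : ℕ → ℝ × ℝ
  | 0 => (0, 0)
  | k + 1 =>
      let R := hitTAfter A ω (excTimes A B ω k).2
      (R, uEndAfter B ω R)

/-- The range of the continuous-time walk during the time interval `[a, b]`. -/
def ctRange {d N : ℕ} (ω : CTPath d N) (a b : ℝ) : Set (Torus d N) :=
  {v | ∃ t, a ≤ t ∧ t ≤ b ∧ ctPos ω t = v}

/-! ### The killed walk and the quasistationary distribution -/

/-- The action of the substochastic matrix `P^B` (walk killed on `B`) on a
vector `v`. -/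
def killedMul (d N : ℕ) (B : Set (Torus d N)) (v : Torus d N → ℝ) (x : Torus d N) : ℝ :=
  ∑ᶠ y : Torus d N, if y ∉ B ∧ adj x y then v y / (2 * d) else 0

/-- `l` is an eigenvalue of the killed transition matrix `P^B`. -/
def IsKilledEigenvalue (d N : ℕ) (B : Set (Torus d N)) (l : ℝ) : Prop :=
  ∃ v : Torus d N → ℝ, v ≠ 0 ∧ (∀ x ∈ B, v x = 0) ∧
    ∀ x, x ∉ B → killedMul d N B v x = l * v x

/-- `σ` is the quasistationary distribution on `T ∖ B`: the normalized
non-negative principal (Perron–Frobenius) eigenvector of `P^B`. -/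
def IsQSD (d N : ℕ) (B : Set (Torus d N)) (σ : Torus d N → ℝ) : Prop :=
  (∀ x, 0 ≤ σ x) ∧ (∀ x ∈ B, σ x = 0) ∧ (∑ᶠ x, σ x = 1) ∧
  ∃ l : ℝ, (∀ x, x ∉ B → killedMul d N B σ x = l * σ x) ∧
    ∀ l', IsKilledEigenvalue d N B l' → l' ≤ l

/-- The Dirichlet form of the simple random walk on the torus. -/
def dirichlet (d N : ℕ) (g : Torus d N → ℝ) : ℝ :=
  (1 / 2) * ∑ᶠ x : Torus d N, ∑ᶠ y : Torus d N,
    if adj x y then (g x - g y) ^ 2 / (2 * d * (N : ℝ) ^ d) else 0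

end Frag

namespace Frag

/-! ### Averaging operators on the torus -/

/-- The transition operator of the simple random walk on the torus. -/
def srwMean (d N : ℕ) : (Torus d N → ℝ) →ₗ[ℝ] (Torus d N → ℝ) where
  toFun f x := (∑ i, (f (x + Pi.single i 1) + f (x - Pi.single i 1))) / (2 * d)
  map_add' f g := by
    ext x
    simp only [Pi.add_apply, ← add_div, ← Finset.sum_add_distrib]
    congr 1
    exact Finset.sum_congr rfl fun i _ => by ring
  map_smul' c f := by
    ext x
    simp only [Pi.smul_apply, smul_eq_mul, RingHom.id_apply, ← mul_add, ← Finset.mul_sum,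
      mul_div_assoc]

/-- The transition operator of the lazy simple random walk on the torus. -/
def lazyMean (d N : ℕ) : (Torus d N → ℝ) →ₗ[ℝ] (Torus d N → ℝ) :=
  (1 / 2 : ℝ) • (LinearMap.id + srwMean d N)

section Operators

variable {d N : ℕ}

lemma srwMean_apply (f : Torus d N → ℝ) (x : Torus d N) :
    srwMean d N f x = (∑ i, (f (x + Pi.single i 1) + f (x - Pi.single i 1))) / (2 * d) := rfl

lemma lazyMean_apply (f : Torus d N → ℝ) (x : Torus d N) :
    lazyMean d N f x = (f x + srwMean d N f x) / 2 := by
  simp [lazyMean]; ring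

lemma srwMean_mono : Monotone (srwMean d N) := by
  intro f g h x
  simp only [srwMean_apply]
  gcongr <;> exact h _

lemma lazyMean_mono : Monotone (lazyMean d N) := by
  intro f g h x
  simp only [lazyMean_apply]
  linarith [h x, srwMean_mono h x]

lemma srwMean_const (hd : 0 < d) (c : ℝ) : srwMean d N (fun _ => c) = fun _ => c := by
  ext x
  have : (d : ℝ) ≠ 0 := by positivity
  simp only [srwMean_apply, Finset.sum_const, Finset.card_univ, Fintype.card_fin, nsmul_eq_mul]
  field_simp
  ring

lemma lazyMean_const (hd : 0 < d) (c : ℝ) : lazyMean d N (fun _ => c) = fun _ => c := by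
  ext x
  rw [lazyMean_apply, srwMean_const hd]
  ring

lemma lazyMean_pow_mono (n : ℕ) : Monotone ⇑(lazyMean d N ^ n) := by
  rw [Module.End.coe_pow]
  exact lazyMean_mono.iterate n

end Operators

/-! ### Characters of the torus -/

/-- The distance to `0` on the discrete circle. -/
def circleNorm {N : ℕ} (a : ZMod N) : ℕ := min a.val (-a).val

lemma one_le_circleNorm {N : ℕ} {a : ZMod N} (ha : a ≠ 0) : 1 ≤ circleNorm a := by
  have h1 : a.val ≠ 0 := by simpa [ZMod.val_eq_zero] using ha
  have h2 : (-a).val ≠ 0 := by simpa [ZMod.val_eq_zero] using ha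
  rw [circleNorm]
  omega

section Characters

variable {d N : ℕ} [NeZero N]

/-- The real part of the standard additive character, `a ↦ cos (2πa/N)`. -/
def cosChar (a : ZMod N) : ℝ := (ZMod.stdAddChar a).re

/-- The imaginary part of the standard additive character, `a ↦ sin (2πa/N)`. -/
def sinChar (a : ZMod N) : ℝ := (ZMod.stdAddChar a).im

lemma cosChar_intCast (j : ℤ) : cosChar (j : ZMod N) = Real.cos (2 * Real.pi * j / N) := by
  rw [cosChar, ZMod.stdAddChar_coe,
    show (2 * (Real.pi : ℂ) * Complex.I * j / N) =
      ((2 * Real.pi * j / N : ℝ) : ℂ) * Complex.I by push_cast; ring]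
  exact Complex.exp_ofReal_mul_I_re _

lemma sinChar_intCast (j : ℤ) : sinChar (j : ZMod N) = Real.sin (2 * Real.pi * j / N) := by
  rw [sinChar, ZMod.stdAddChar_coe,
    show (2 * (Real.pi : ℂ) * Complex.I * j / N) =
      ((2 * Real.pi * j / N : ℝ) : ℂ) * Complex.I by push_cast; ring]
  exact Complex.exp_ofReal_mul_I_im _

lemma cosChar_add (a b : ZMod N) :
    cosChar (a + b) = cosChar a * cosChar b - sinChar a * sinChar b := by
  simp [cosChar, sinChar, AddChar.map_add_eq_mul]

lemma cosChar_neg (a : ZMod N) : cosChar (-a) = cosChar a := by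
  obtain ⟨j, rfl⟩ := ZMod.intCast_surjective a
  rw [← Int.cast_neg, cosChar_intCast, cosChar_intCast, ← Real.cos_neg]
  push_cast
  ring_nf

lemma sinChar_neg (a : ZMod N) : sinChar (-a) = -sinChar a := by
  obtain ⟨j, rfl⟩ := ZMod.intCast_surjective a
  rw [← Int.cast_neg, sinChar_intCast, sinChar_intCast, ← Real.sin_neg]
  push_cast
  ring_nf

lemma cosChar_zero : cosChar (0 : ZMod N) = 1 := by simp [cosChar]

lemma cosChar_sq_add_sinChar_sq (a : ZMod N) : cosChar a ^ 2 + sinChar a ^ 2 = 1 := by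
  obtain ⟨j, rfl⟩ := ZMod.intCast_surjective a
  rw [cosChar_intCast, sinChar_intCast, add_comm]
  exact Real.sin_sq_add_cos_sq _

lemma abs_cosChar_le_one (a : ZMod N) : |cosChar a| ≤ 1 := by
  rw [← sq_le_one_iff_abs_le_one]
  nlinarith [cosChar_sq_add_sinChar_sq a, sq_nonneg (sinChar a)]

lemma cosChar_le_one (a : ZMod N) : cosChar a ≤ 1 := (abs_le.1 (abs_cosChar_le_one a)).2

lemma cosChar_add_add_cosChar_sub (a b : ZMod N) :
    cosChar (a + b) + cosChar (a - b) = 2 * cosChar b * cosChar a := by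
  rw [sub_eq_add_neg, cosChar_add, cosChar_add, cosChar_neg, sinChar_neg]
  ring

lemma cosChar_eq_cos_circleNorm (a : ZMod N) :
    cosChar a = Real.cos (2 * Real.pi * circleNorm a / N) := by
  have key : ∀ b : ZMod N, cosChar b = Real.cos (2 * Real.pi * b.val / N) := fun b => by
    simpa using cosChar_intCast (N := N) b.val
  rcases min_choice a.val (-a).val with h | h
  · rw [circleNorm, h, key]
  · rw [circleNorm, h, ← key, cosChar_neg]

lemma two_mul_circleNorm_le (a : ZMod N) : 2 * circleNorm a ≤ N := by
  have h := ZMod.neg_val a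
  have h2 := ZMod.val_lt a
  rw [circleNorm]
  split_ifs at h <;> omega

lemma one_sub_cosChar_le (a : ZMod N) :
    1 - cosChar a ≤ 20 * ((circleNorm a : ℝ) / N) ^ 2 := by
  rw [cosChar_eq_cos_circleNorm]
  have h := Real.one_sub_sq_div_two_le_cos (x := 2 * Real.pi * circleNorm a / N)
  have hpi : Real.pi ^ 2 ≤ 10 := by nlinarith [Real.pi_lt_d2, Real.pi_pos]
  have e : (2 * Real.pi * circleNorm a / N) ^ 2 / 2 =
    2 * Real.pi ^ 2 * ((circleNorm a : ℝ) / N) ^ 2 := by ring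
  nlinarith [sq_nonneg ((circleNorm a : ℝ) / N)]

lemma le_one_sub_cosChar (a : ZMod N) :
    8 * ((circleNorm a : ℝ) / N) ^ 2 ≤ 1 - cosChar a := by
  rw [cosChar_eq_cos_circleNorm]
  have hN : (0 : ℝ) < N := by exact_mod_cast Nat.pos_of_neZero N
  have h2 : (2 * circleNorm a : ℝ) ≤ N := by exact_mod_cast two_mul_circleNorm_le a
  have hx : |2 * Real.pi * circleNorm a / N| ≤ Real.pi := by
    rw [abs_of_nonneg (by positivity), div_le_iff₀ hN]
    nlinarith [Real.pi_pos]
  have h := Real.cos_le_one_sub_mul_cos_sq hx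
  have e : 2 / Real.pi ^ 2 * (2 * Real.pi * circleNorm a / N) ^ 2 =
    8 * ((circleNorm a : ℝ) / N) ^ 2 := by
    field_simp [Real.pi_ne_zero]
    ring
  linarith

/-- The real part of the character of the torus with frequency `k`. -/
def torusChar (k x : Torus d N) : ℝ := cosChar (∑ i, k i * x i)

/-- The eigenvalue of the simple random walk belonging to the frequency `k`. -/
def srwEigenvalue (k : Torus d N) : ℝ := (∑ i, cosChar (k i)) / d

lemma sum_torusChar (x : Torus d N) :
    ∑ k, torusChar k x = if x = 0 then (N : ℝ) ^ d else 0 := by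
  have hc : ∑ k : Torus d N, ZMod.stdAddChar (∑ i, k i * x i) =
      if x = 0 then (N : ℂ) ^ d else 0 := by
    have h1 : ∀ k : Torus d N, ZMod.stdAddChar (∑ i, k i * x i) =
        ∏ i, ZMod.stdAddChar (k i * x i) := fun k => by
      induction (Finset.univ : Finset (Fin d)) using Finset.induction_on with
      | empty => simp
      | insert a s ha ih => rw [Finset.sum_insert ha, Finset.prod_insert ha,
          AddChar.map_add_eq_mul, ih]
    simp_rw [h1]
    rw [← Fintype.prod_sum (fun i (a : ZMod N) => ZMod.stdAddChar (a * x i))]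
    simp_rw [AddChar.sum_mulShift _ (ZMod.isPrimitive_stdAddChar N), Nat.cast_ite, Nat.cast_zero]
    split_ifs with hx
    · simp [hx, ZMod.card]
    · obtain ⟨i, hi⟩ := Function.ne_iff.1 hx
      exact Finset.prod_eq_zero (Finset.mem_univ i) (if_neg hi)
  have := congrArg Complex.re hc
  rw [Complex.re_sum] at this
  simp only [torusChar, cosChar, this]
  split_ifs
  · exact_mod_cast Complex.natCast_re (N ^ d)
  · simp

lemma srwMean_torusChar (k y : Torus d N) :
    srwMean d N (fun x => torusChar k (x - y)) =
      fun x => srwEigenvalue k * torusChar k (x - y) := by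
  ext x
  have key : ∀ i, torusChar k (x + Pi.single i 1 - y) + torusChar k (x - Pi.single i 1 - y) =
      2 * cosChar (k i) * torusChar k (x - y) := fun i => by
    have e1 : ∑ j, k j * (x + Pi.single i 1 - y : Torus d N) j =
        ∑ j, k j * (x - y) j + k i := by
      rw [add_sub_right_comm]
      simp [mul_add, Finset.sum_add_distrib, Pi.single_apply]
    have e2 : ∑ j, k j * (x - Pi.single i 1 - y : Torus d N) j =
        ∑ j, k j * (x - y) j - k i := by
      rw [sub_right_comm]
      simp [mul_sub, Finset.sum_sub_distrib, Pi.single_apply]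
    rw [torusChar, torusChar, e1, e2, cosChar_add_add_cosChar_sub]
    rfl
  simp only [srwMean_apply, key, srwEigenvalue, ← Finset.sum_mul, ← Finset.mul_sum]
  ring

lemma srwEigenvalue_zero (hd : 0 < d) : srwEigenvalue (0 : Torus d N) = 1 := by
  have : (d : ℝ) ≠ 0 := by positivity
  simp [srwEigenvalue, cosChar_zero, this]

lemma abs_srwEigenvalue_le_one (k : Torus d N) : |srwEigenvalue k| ≤ 1 := by
  rw [srwEigenvalue, abs_div, Nat.abs_cast]
  refine div_le_one_of_le₀ ((Finset.abs_sum_le_sum_abs _ _).trans ?_) (by positivity)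
  simpa using Finset.sum_le_sum fun i (_ : i ∈ Finset.univ) => abs_cosChar_le_one (k i)

lemma srwEigenvalue_le (hd : 0 < d) {k : Torus d N} (hk : k ≠ 0) :
    srwEigenvalue k ≤ 1 - 8 / (d * (N : ℝ) ^ 2) := by
  obtain ⟨i, hi⟩ := Function.ne_iff.1 hk
  have hN : (0 : ℝ) < N := by exact_mod_cast Nat.pos_of_neZero N
  have hd' : (0 : ℝ) < d := by exact_mod_cast hd
  have h1 : 8 / (N : ℝ) ^ 2 ≤ 1 - cosChar (k i) := by
    refine le_trans ?_ (le_one_sub_cosChar (k i))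
    have : (1 : ℝ) ≤ circleNorm (k i) := by exact_mod_cast one_le_circleNorm hi
    rw [div_pow, mul_div_assoc']
    gcongr
    nlinarith
  have h2 : 1 - cosChar (k i) ≤ ∑ j, (1 - cosChar (k j)) :=
    Finset.single_le_sum (f := fun j => 1 - cosChar (k j))
      (fun j _ => sub_nonneg.2 (cosChar_le_one _)) (Finset.mem_univ i)
  rw [Finset.sum_sub_distrib] at h2
  simp only [Finset.sum_const, Finset.card_univ, Fintype.card_fin, nsmul_eq_mul, mul_one] at h2
  rw [srwEigenvalue, div_le_iff₀ hd', sub_mul, div_mul_eq_mul_div, mul_comm (d : ℝ) (N ^ 2 : ℝ),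
    mul_div_mul_right _ _ hd'.ne']
  linarith

lemma lazyMean_pow_eq (f : Torus d N → ℝ) (n : ℕ) :
    (lazyMean d N ^ n) f = ∑ y, ∑ k, (f y / (N : ℝ) ^ d * ((1 + srwEigenvalue k) / 2) ^ n) •
      fun x => torusChar k (x - y) := by
  have hN : (N : ℝ) ^ d ≠ 0 := pow_ne_zero _ (by exact_mod_cast NeZero.ne N)
  induction n with
  | zero =>
    ext x
    simp only [pow_zero, mul_one, Module.End.one_apply, Finset.sum_apply, Pi.smul_apply,
      smul_eq_mul, ← Finset.mul_sum, sum_torusChar, sub_eq_zero]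
    simp [hN]
  | succ n ih =>
    rw [pow_succ', Module.End.mul_apply, ih, map_sum]
    refine Finset.sum_congr rfl fun y _ => ?_
    rw [map_sum]
    refine Finset.sum_congr rfl fun k _ => ?_
    rw [map_smul]
    ext x
    simp only [Pi.smul_apply, smul_eq_mul, lazyMean_apply, srwMean_torusChar]
    ring

/-- Pointwise mixing of the lazy walk. -/
lemma abs_lazyMean_pow_sub_le (hd : 0 < d) {f : Torus d N → ℝ} (hf : 0 ≤ f) (n : ℕ)
    (x : Torus d N) :
    |(lazyMean d N ^ n) f x - (∑ y, f y) / (N : ℝ) ^ d| ≤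
      (N : ℝ) ^ d * Real.exp (-(4 * n / (d * (N : ℝ) ^ 2))) * ((∑ y, f y) / (N : ℝ) ^ d) := by
  have hN : (0 : ℝ) < (N : ℝ) ^ d := pow_pos (by exact_mod_cast Nat.pos_of_neZero N) _
  set ρ := Real.exp (-(4 * n / (d * (N : ℝ) ^ 2)))
  have hev : ∀ k : Torus d N, k ≠ 0 → |((1 + srwEigenvalue k) / 2) ^ n| ≤ ρ := fun k hk => by
    have h1 := srwEigenvalue_le hd hk
    have h2 := abs_le.1 (abs_srwEigenvalue_le_one k)
    have h3 : (1 + srwEigenvalue k) / 2 ≤ Real.exp (-(4 / (d * (N : ℝ) ^ 2))) := by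
      have := Real.add_one_le_exp (-(4 / (d * (N : ℝ) ^ 2)))
      have e : (8 : ℝ) / (d * (N : ℝ) ^ 2) = 2 * (4 / (d * (N : ℝ) ^ 2)) := by ring
      linarith
    have e : ρ = Real.exp (-(4 / (d * (N : ℝ) ^ 2))) ^ n := by
      rw [← Real.exp_nat_mul]
      refine congrArg Real.exp ?_
      ring
    rw [abs_of_nonneg (pow_nonneg (by linarith) n), e]
    exact pow_le_pow_left₀ (by linarith) h3 n
  have hinner : ∀ y, |∑ k, ((1 + srwEigenvalue k) / 2) ^ n * torusChar k (x - y) - 1| ≤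
      (N : ℝ) ^ d * ρ := fun y => by
    rw [Fintype.sum_eq_add_sum_compl (0 : Torus d N)]
    have h0 : torusChar (0 : Torus d N) (x - y) = 1 := by simp [torusChar, cosChar_zero]
    rw [srwEigenvalue_zero hd, h0]
    norm_num
    refine (Finset.abs_sum_le_sum_abs _ _).trans ?_
    refine (Finset.sum_le_sum (g := fun _ => ρ) fun k hk => ?_).trans ?_
    · rw [abs_mul]
      refine (mul_le_of_le_one_right (abs_nonneg _) (abs_cosChar_le_one _)).trans (hev k ?_)
      simpa using hk
    · rw [Finset.sum_const, nsmul_eq_mul]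
      have : ((({0} : Finset (Torus d N))ᶜ).card : ℝ) ≤ (N : ℝ) ^ d := by
        have := Finset.card_le_univ (({0} : Finset (Torus d N))ᶜ)
        rw [Fintype.card_fun, ZMod.card, Fintype.card_fin] at this
        exact_mod_cast this
      exact mul_le_mul_of_nonneg_right this (Real.exp_nonneg _)
  have e : (lazyMean d N ^ n) f x - (∑ y, f y) / (N : ℝ) ^ d =
      ∑ y, f y / (N : ℝ) ^ d *
        (∑ k, ((1 + srwEigenvalue k) / 2) ^ n * torusChar k (x - y) - 1) := by
    rw [lazyMean_pow_eq, Finset.sum_div]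
    simp only [Finset.sum_apply, Pi.smul_apply, smul_eq_mul, mul_sub, Finset.mul_sum,
      Finset.sum_sub_distrib, mul_one, mul_assoc]
  rw [e]
  refine (Finset.abs_sum_le_sum_abs _ _).trans ?_
  rw [Finset.sum_div, Finset.mul_sum]
  refine Finset.sum_le_sum fun y _ => ?_
  have := div_nonneg (hf y) hN.le
  rw [abs_mul, abs_of_nonneg this, mul_comm]
  exact mul_le_mul_of_nonneg_right (hinner y) this

end Characters

/-! ### A nearly superharmonic function on the torus -/

lemma rpow_neg_quarter_add_le {a t : ℝ} (ha : 0 < a) (ht : |t| ≤ a / 10) :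
    (a + t) ^ (-(1 / 4) : ℝ) ≤
      a ^ (-(1 / 4) : ℝ) * (1 - t / a / 4 + 11 / 64 * (t / a) ^ 2) := by
  obtain ⟨u, rfl⟩ : ∃ u, t = a * u := ⟨t / a, by field_simp⟩
  rw [abs_mul, abs_of_pos ha, div_eq_mul_one_div, mul_le_mul_iff_right₀ ha] at ht
  obtain ⟨h1, h2⟩ := abs_le.1 ht
  rw [mul_div_cancel_left₀ _ ha.ne', show a + a * u = a * (1 + u) by ring,
    Real.mul_rpow ha.le (by linarith)]
  refine mul_le_mul_of_nonneg_left ?_ (by positivity)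
  set q := 1 - u / 4 + 11 / 64 * u ^ 2 with hq
  have hq0 : 0 < q := by nlinarith
  have h3 : 1 - u / 2 + 13 / 32 * u ^ 2 - 11 / 128 * u ^ 3 ≤ q ^ 2 := by
    nlinarith [sq_nonneg (u ^ 2)]
  have h4 : 1 ≤ q ^ 4 * (1 + u) := by
    have h5 : 0 ≤ 1 - u / 2 + 13 / 32 * u ^ 2 - 11 / 128 * u ^ 3 := by
      nlinarith [sq_nonneg u, mul_nonneg (sq_nonneg u) (by linarith : 0 ≤ 1 / 10 - u)]
    have h6 : (1 - u / 2 + 13 / 32 * u ^ 2 - 11 / 128 * u ^ 3) ^ 2 ≤ q ^ 4 := by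
      calc _ ≤ (q ^ 2) ^ 2 := pow_le_pow_left₀ h5 h3 2
        _ = q ^ 4 := by ring
    have h7 : 1 ≤ (1 - u / 2 + 13 / 32 * u ^ 2 - 11 / 128 * u ^ 3) ^ 2 * (1 + u) := by
      have e : (1 - u / 2 + 13 / 32 * u ^ 2 - 11 / 128 * u ^ 3) ^ 2 * (1 + u) - 1 =
        u ^ 2 * (1 / 16 + u * (31 / 64) - u ^ 2 * (335 / 1024) + u ^ 3 * (371 / 2048)
          - u ^ 4 * (1023 / 16384) + u ^ 5 * (121 / 16384)) := by
        ring
      have hp : ∀ k : ℕ, |u ^ k| ≤ (1 / 10) ^ k := fun k => by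
        rw [abs_pow]
        exact pow_le_pow_left₀ (abs_nonneg u) ht k
      have p2 := abs_le.1 (hp 2)
      have p3 := abs_le.1 (hp 3)
      have p4 := abs_le.1 (hp 4)
      have p5 := abs_le.1 (hp 5)
      norm_num at p2 p3 p4 p5
      have := mul_nonneg (sq_nonneg u) (by linarith [p2.2, p3.1, p4.2, p5.1] :
        0 ≤ 1 / 16 + u * (31 / 64) - u ^ 2 * (335 / 1024) + u ^ 3 * (371 / 2048)
          - u ^ 4 * (1023 / 16384) + u ^ 5 * (121 / 16384))
      linarith
    exact h7.trans (mul_le_mul_of_nonneg_right h6 (by linarith))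
  have h8 : (1 + u)⁻¹ ≤ q ^ 4 := by
    rw [inv_le_iff_one_le_mul₀ (by linarith)]
    exact h4
  calc (1 + u) ^ (-(1 / 4) : ℝ) = ((1 + u)⁻¹) ^ (1 / 4 : ℝ) := by
        rw [Real.rpow_neg (by linarith), Real.inv_rpow (by linarith)]
    _ ≤ (q ^ 4) ^ (1 / 4 : ℝ) :=
        Real.rpow_le_rpow (inv_nonneg.2 (by linarith)) h8 (by norm_num)
    _ = q := by
        rw [← Real.rpow_natCast, ← Real.rpow_mul hq0.le]
        norm_num

lemma torusDist_zero_left {d N : ℕ} (x : Torus d N) :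
    torusDist 0 x = Finset.univ.sup fun i => circleNorm (x i) := by
  simp only [torusDist, circleNorm, Pi.zero_apply, zero_sub, sub_zero]
  simp only [min_comm]

section Barrier

variable {d N : ℕ} [NeZero N]

/-- The squared distance to `0` on the torus in its smooth periodic version, rescaled by `N ^ 2`. -/
def chordSq (x : Torus d N) : ℝ := ∑ i, (1 - cosChar (x i))

/-- A positive regularization of `chordSq` at scale one. -/
def chordSqReg (x : Torus d N) : ℝ := 400 * d * (1 - cosChar (1 : ZMod N)) + chordSq x

lemma chordSq_nonneg (x : Torus d N) : 0 ≤ chordSq x :=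
  Finset.sum_nonneg fun _ _ => sub_nonneg.2 (cosChar_le_one _)

lemma one_sub_cosChar_one_pos (hN : 2 ≤ N) : 0 < 1 - cosChar (1 : ZMod N) := by
  have : Fact (1 < N) := ⟨hN⟩
  have h1 : (1 : ℝ) ≤ circleNorm (1 : ZMod N) := by
    exact_mod_cast one_le_circleNorm (one_ne_zero : (1 : ZMod N) ≠ 0)
  have h2 : (0 : ℝ) < N := by exact_mod_cast Nat.pos_of_neZero N
  exact lt_of_lt_of_le (by positivity) (le_one_sub_cosChar (1 : ZMod N))

lemma one_sub_cosChar_one_le (hN : 2 ≤ N) : 1 - cosChar (1 : ZMod N) ≤ 20 * (1 / N : ℝ) ^ 2 := by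
  have : Fact (1 < N) := ⟨hN⟩
  refine (one_sub_cosChar_le _).trans ?_
  have h1 : (circleNorm (1 : ZMod N) : ℝ) ≤ 1 := by
    exact_mod_cast (min_le_left _ _).trans (ZMod.val_one N).le
  gcongr

lemma chordSqReg_pos (hd : 0 < d) (hN : 2 ≤ N) (x : Torus d N) : 0 < chordSqReg x := by
  have := one_sub_cosChar_one_pos hN
  have := chordSq_nonneg x
  rw [chordSqReg]
  positivity

lemma chordSq_add_single (x : Torus d N) (i : Fin d) (a : ZMod N) :
    chordSq (x + Pi.single i a) = chordSq x + (cosChar (x i) - cosChar (x i + a)) := by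
  rw [chordSq, chordSq, ← sub_eq_iff_eq_add', ← Finset.sum_sub_distrib, Finset.sum_eq_single i]
  · simp
  · intro j _ hj
    simp [hj]
  · simp

lemma rpow_chordSqReg_pair_le (hd : 0 < d) (hN : 2 ≤ N) (x : Torus d N) (i : Fin d) :
    chordSqReg (x + Pi.single i 1) ^ (-(1 / 4) : ℝ) +
        chordSqReg (x - Pi.single i 1) ^ (-(1 / 4) : ℝ) ≤
      chordSqReg x ^ (-(1 / 4) : ℝ) *
        (2 - (1 - cosChar (1 : ZMod N)) * cosChar (x i) / chordSqReg x / 2 +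
          11 / 32 * ((1 - cosChar (1 : ZMod N)) ^ 2 +
            4 * (1 - cosChar (1 : ZMod N)) * (1 - cosChar (x i))) / chordSqReg x ^ 2) := by
  have hψ := chordSqReg_pos hd hN x
  have hβ := one_sub_cosChar_one_pos hN
  have hβ2 : 1 - cosChar (1 : ZMod N) ≤ 2 := by
    linarith [(abs_le.1 (abs_cosChar_le_one (1 : ZMod N))).1]
  have hS : 1 - cosChar (x i) ≤ chordSq x :=
    Finset.single_le_sum (f := fun j => 1 - cosChar (x j))
      (fun j _ => sub_nonneg.2 (cosChar_le_one _)) (Finset.mem_univ i)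
  have hd' : (1 : ℝ) ≤ d := by exact_mod_cast hd
  have hτ := abs_le.1 (abs_cosChar_le_one (x i))
  set β := 1 - cosChar (1 : ZMod N) with hβdef
  set ψ := chordSqReg x with hψdef
  set τ := cosChar (x i) with hτdef
  set u := sinChar (x i) * sinChar (1 : ZMod N) with hu
  have hplus : chordSqReg (x + Pi.single i 1) = ψ + (τ * β + u) := by
    rw [chordSqReg, chordSq_add_single, cosChar_add, hψdef, chordSqReg]
    ring
  have hminus : chordSqReg (x - Pi.single i 1) = ψ + (τ * β - u) := by
    rw [sub_eq_add_neg, ← Pi.single_neg, chordSqReg, chordSq_add_single, cosChar_add,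
      cosChar_neg, sinChar_neg, hψdef, chordSqReg]
    ring
  have hu2 : u ^ 2 ≤ 4 * β * (1 - τ) := by
    have e1 : sinChar (x i) ^ 2 = (1 - τ) * (1 + τ) := by
      linarith [cosChar_sq_add_sinChar_sq (x i)]
    have e2 : sinChar (1 : ZMod N) ^ 2 = β * (2 - β) := by
      linarith [cosChar_sq_add_sinChar_sq (1 : ZMod N)]
    rw [hu, mul_pow, e1, e2]
    have a1 : (1 - τ) * (1 + τ) ≤ (1 - τ) * 2 :=
      mul_le_mul_of_nonneg_left (by linarith) (by linarith)
    have a2 : β * (2 - β) ≤ β * 2 := mul_le_mul_of_nonneg_left (by linarith) hβ.le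
    calc (1 - τ) * (1 + τ) * (β * (2 - β)) ≤ ((1 - τ) * 2) * (β * 2) :=
          mul_le_mul a1 a2 (mul_nonneg hβ.le (by linarith)) (mul_nonneg (by linarith) (by norm_num))
      _ = 4 * β * (1 - τ) := by ring
  have hτβ : (τ * β) ^ 2 ≤ β ^ 2 := by
    rw [mul_pow]
    exact mul_le_of_le_one_left (sq_nonneg β) ((sq_le_one_iff_abs_le_one _).2 (abs_le.2 hτ))
  have hψ2 : 2 * β ^ 2 + 8 * β * (1 - τ) ≤ (ψ / 10) ^ 2 := by
    have a1 : 400 * β + (1 - τ) ≤ ψ := by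
      rw [hψdef, chordSqReg]
      nlinarith
    have a2 : (400 * β + (1 - τ)) ^ 2 ≤ ψ ^ 2 := pow_le_pow_left₀ (by linarith) a1 2
    nlinarith [mul_nonneg hβ.le (by linarith : 0 ≤ 1 - τ), sq_nonneg (1 - τ)]
  have hb1 : |τ * β + u| ≤ ψ / 10 :=
    abs_le_of_sq_le_sq (by nlinarith [sq_nonneg (τ * β - u)]) (by positivity)
  have hb2 : |τ * β - u| ≤ ψ / 10 :=
    abs_le_of_sq_le_sq (by nlinarith [sq_nonneg (τ * β + u)]) (by positivity)
  rw [hplus, hminus]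
  refine (add_le_add (rpow_neg_quarter_add_le hψ hb1) (rpow_neg_quarter_add_le hψ hb2)).trans ?_
  rw [← mul_add]
  refine mul_le_mul_of_nonneg_left ?_ (by positivity)
  have e : 1 - (τ * β + u) / ψ / 4 + 11 / 64 * ((τ * β + u) / ψ) ^ 2 +
      (1 - (τ * β - u) / ψ / 4 + 11 / 64 * ((τ * β - u) / ψ) ^ 2) =
      2 - β * τ / ψ / 2 + 11 / 32 * ((τ * β) ^ 2 + u ^ 2) / ψ ^ 2 := by
    ring
  rw [e]
  gcongr

/-- The function `chordSqReg ^ (-1/4)` is superharmonic up to an error of order `N ^ (-2)`. -/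
lemma srwMean_rpow_chordSqReg_le (hd : 3 ≤ d) (hN : 2 ≤ N) (x : Torus d N) :
    srwMean d N (fun y => chordSqReg y ^ (-(1 / 4) : ℝ)) x ≤
      chordSqReg x ^ (-(1 / 4) : ℝ) + (1 - cosChar (1 : ZMod N)) := by
  have hψ := chordSqReg_pos (by omega) hN x
  have hβ := one_sub_cosChar_one_pos hN
  have hS := chordSq_nonneg x
  have hd' : (3 : ℝ) ≤ d := by exact_mod_cast hd
  have hsum := Finset.sum_le_sum fun i (_ : i ∈ Finset.univ) =>
    rpow_chordSqReg_pair_le (by omega) hN x i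
  have hψS : chordSqReg x = 400 * d * (1 - cosChar (1 : ZMod N)) + chordSq x := rfl
  have hτsum : ∑ i, cosChar (x i) = d - chordSq x := by
    simp [chordSq, Finset.sum_sub_distrib]
  set β := 1 - cosChar (1 : ZMod N) with hβdef
  set ψ := chordSqReg x with hψdef
  set S := chordSq x with hSdef
  have e : ∑ i, ψ ^ (-(1 / 4) : ℝ) * (2 - β * cosChar (x i) / ψ / 2 +
      11 / 32 * (β ^ 2 + 4 * β * (1 - cosChar (x i))) / ψ ^ 2) =
      ψ ^ (-(1 / 4) : ℝ) * (2 * d - β * (d - S) / ψ / 2 +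
        11 / 32 * (d * β ^ 2 + 4 * β * S) / ψ ^ 2) := by
    rw [← Finset.mul_sum, Finset.sum_add_distrib, Finset.sum_sub_distrib, ← hτsum, hSdef, chordSq,
      ← Finset.sum_div, ← Finset.sum_div, ← Finset.sum_div, ← Finset.mul_sum, ← Finset.mul_sum,
      Finset.sum_add_distrib, ← Finset.mul_sum]
    simp only [Finset.sum_const, Finset.card_univ, Fintype.card_fin, nsmul_eq_mul]
    ring
  rw [e] at hsum
  rw [srwMean_apply, div_le_iff₀ (by positivity)]
  refine hsum.trans ?_
  have h1 : 11 / 32 * (d * β ^ 2 + 4 * β * S) / ψ ^ 2 ≤ 11 / 8 * β / ψ := by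
    rw [div_le_div_iff₀ (by positivity) hψ]
    have : d * β + 4 * S ≤ 4 * ψ := by rw [hψS]; nlinarith
    calc 11 / 32 * (d * β ^ 2 + 4 * β * S) * ψ = 11 / 32 * β * ψ * (d * β + 4 * S) := by ring
      _ ≤ 11 / 32 * β * ψ * (4 * ψ) := by gcongr
      _ = 11 / 8 * β * ψ ^ 2 := by ring
  have h2 : 2 * d - β * (d - S) / ψ / 2 + 11 / 32 * (d * β ^ 2 + 4 * β * S) / ψ ^ 2 ≤
      2 * d + β * (S - 1 / 4) / (2 * ψ) := by
    have e1 : 11 / 8 * β / ψ = 11 / 4 * β / (2 * ψ) := by field_simp; norm_num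
    have e2 : β * (d - S) / ψ / 2 = β * (d - S) / (2 * ψ) := by field_simp
    have : β * (S - 1 / 4) / (2 * ψ) + β * (d - S) / (2 * ψ) - 11 / 4 * β / (2 * ψ) =
        β * (d - 3) / (2 * ψ) := by ring
    have h3 : 0 ≤ β * (d - 3) / (2 * ψ) :=
      div_nonneg (mul_nonneg hβ.le (by linarith)) (by positivity)
    linarith
  have h4 : ψ ^ (-(1 / 4) : ℝ) * (β * (S - 1 / 4) / (2 * ψ)) ≤ 2 * d * β := by
    rcases le_or_gt S (1 / 4) with hs | hs
    · refine le_trans (mul_nonpos_of_nonneg_of_nonpos (by positivity) ?_) (by positivity)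
      exact div_nonpos_of_nonpos_of_nonneg
        (mul_nonpos_of_nonneg_of_nonpos hβ.le (by linarith)) (by positivity)
    · have hψ4 : 1 / 4 ≤ ψ := by
        have : 0 ≤ 400 * d * β := by positivity
        linarith
      have a1 : ψ ^ (-(1 / 4) : ℝ) ≤ 4 := by
        refine (Real.rpow_le_rpow_of_nonpos (by norm_num) hψ4 (by norm_num)).trans ?_
        rw [Real.rpow_neg (by norm_num), ← Real.inv_rpow (by norm_num)]
        norm_num
        exact (Real.rpow_le_rpow_of_exponent_le (by norm_num : (1 : ℝ) ≤ 4)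
          (by norm_num : (1 / 4 : ℝ) ≤ 1)).trans (by norm_num)
      have a2 : β * (S - 1 / 4) / (2 * ψ) ≤ β / 2 := by
        rw [div_le_iff₀ (by positivity)]
        have : S - 1 / 4 ≤ ψ := by
          have : 0 ≤ 400 * d * β := by positivity
          linarith
        nlinarith
      calc _ ≤ 4 * (β / 2) := mul_le_mul a1 a2
            (div_nonneg (mul_nonneg hβ.le (by linarith)) (by positivity)) (by norm_num)
        _ ≤ 2 * d * β := by nlinarith
  calc _ ≤ ψ ^ (-(1 / 4) : ℝ) * (2 * d + β * (S - 1 / 4) / (2 * ψ)) :=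
        mul_le_mul_of_nonneg_left h2 (by positivity)
    _ ≤ _ := by linarith

lemma chordSqReg_le_of_mem_torusBall (hN : 2 ≤ N) {r : ℝ} (hr : 1 ≤ r) {x : Torus d N}
    (hx : x ∈ torusBall 0 r) : chordSqReg x ≤ 8020 * d * (r / N) ^ 2 := by
  have h1 : ∀ i, 1 - cosChar (x i) ≤ 20 * (r / N) ^ 2 := fun i => by
    refine (one_sub_cosChar_le _).trans ?_
    have : (circleNorm (x i) : ℝ) ≤ r := by
      refine le_trans ?_ (show (torusDist 0 x : ℝ) ≤ r from hx)
      rw [torusDist_zero_left]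
      exact_mod_cast Finset.le_sup (f := fun i => circleNorm (x i)) (Finset.mem_univ i)
    gcongr
  have h2 : chordSq x ≤ d * (20 * (r / N) ^ 2) :=
    (Finset.sum_le_sum fun i _ => h1 i).trans_eq (by simp)
  have h3 : 1 - cosChar (1 : ZMod N) ≤ 20 * (r / N) ^ 2 := by
    refine (one_sub_cosChar_one_le hN).trans ?_
    gcongr
  rw [chordSqReg]
  have := mul_le_mul_of_nonneg_left h3 (by positivity : (0 : ℝ) ≤ 400 * d)
  linarith

lemma le_chordSqReg_of_notMem_torusBall {r : ℝ} (hr : 0 ≤ r) {x : Torus d N}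
    (hx : x ∉ torusBall 0 r) : 8 * (r / N) ^ 2 ≤ chordSqReg x := by
  have hx' : r < (torusDist 0 x : ℝ) := not_le.1 hx
  obtain ⟨i, hi⟩ : ∃ i, r < circleNorm (x i) := by
    by_contra! hcon
    refine absurd hx' (not_lt.2 ?_)
    rw [torusDist_zero_left]
    have : (Finset.univ.sup fun i => circleNorm (x i)) ≤ ⌊r⌋₊ :=
      Finset.sup_le fun i _ => Nat.le_floor (hcon i)
    exact (Nat.cast_le.2 this).trans (Nat.floor_le hr)
  have h1 : 8 * (r / N) ^ 2 ≤ 1 - cosChar (x i) := by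
    refine le_trans ?_ (le_one_sub_cosChar _)
    gcongr
  have h2 : 1 - cosChar (x i) ≤ chordSq x :=
    Finset.single_le_sum (f := fun j => 1 - cosChar (x j))
      (fun j _ => sub_nonneg.2 (cosChar_le_one _)) (Finset.mem_univ i)
  have h3 : 0 ≤ 400 * d * (1 - cosChar (1 : ZMod N)) :=
    mul_nonneg (by positivity) (sub_nonneg.2 (cosChar_le_one _))
  rw [chordSqReg]
  linarith

end Barrier

/-! ### Expected entrance times -/

/-- The transition operator of the simple random walk killed on `V`. -/
def killedMean {d N : ℕ} (V : Set (Torus d N)) : (Torus d N → ℝ) →ₗ[ℝ] (Torus d N → ℝ) where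
  toFun f := Vᶜ.indicator (srwMean d N f)
  map_add' f g := by rw [map_add, Set.indicator_add']
  map_smul' c f := by
    rw [map_smul]
    exact Set.indicator_const_smul _ c (srwMean d N f)

/-- The probability that the simple random walk avoids `V` up to time `n`. -/
def avoidProb {d N : ℕ} (V : Set (Torus d N)) (n : ℕ) : Torus d N → ℝ :=
  (killedMean V ^ n) (Vᶜ.indicator 1)

/-- The expected entrance time of the simple random walk in `V`. -/
def hitMean {d N : ℕ} (V : Set (Torus d N)) (x : Torus d N) : ℝ := ∑' n, avoidProb V n x

section HitMean

variable {d N : ℕ} {V : Set (Torus d N)}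

lemma killedMean_apply (f : Torus d N → ℝ) : killedMean V f = Vᶜ.indicator (srwMean d N f) := rfl

lemma avoidProb_succ (n : ℕ) : avoidProb V (n + 1) = killedMean V (avoidProb V n) := by
  rw [avoidProb, pow_succ', Module.End.mul_apply, avoidProb]

lemma avoidProb_nonneg (n : ℕ) : 0 ≤ avoidProb V n := by
  induction n with
  | zero => exact Set.indicator_nonneg fun _ _ => zero_le_one
  | succ n ih =>
    rw [avoidProb_succ]
    refine Set.indicator_nonneg fun x _ => ?_
    simpa using srwMean_mono ih x

lemma hitMean_nonneg (x : Torus d N) : 0 ≤ hitMean V x :=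
  tsum_nonneg fun n => avoidProb_nonneg n x

lemma sum_avoidProb_succ (n : ℕ) :
    ∑ k ∈ Finset.range (n + 1), avoidProb V k =
      Vᶜ.indicator 1 + killedMean V (∑ k ∈ Finset.range n, avoidProb V k) := by
  rw [Finset.sum_range_succ', map_sum, add_comm]
  simp only [avoidProb_succ]
  rfl

lemma sum_avoidProb_le {g : Torus d N → ℝ} (hg : 0 ≤ g)
    (hgV : ∀ x ∉ V, 1 + srwMean d N g x ≤ g x) (n : ℕ) :
    ∑ k ∈ Finset.range n, avoidProb V k ≤ g := by
  induction n with
  | zero => simpa using hg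
  | succ n ih =>
    intro x
    rw [sum_avoidProb_succ, killedMean_apply, Pi.add_apply]
    by_cases hx : x ∈ V
    · simpa [hx] using hg x
    · rw [Set.indicator_of_mem hx, Set.indicator_of_mem hx]
      exact (add_le_add_right (srwMean_mono ih x) _).trans (hgV x hx)

variable [NeZero N]

/-- A finite supersolution of the equation of expected entrance times in a point. -/
lemma exists_one_add_srwMean_le (hd : 0 < d) (v : Torus d N) :
    ∃ g : Torus d N → ℝ, 0 ≤ g ∧ ∀ x, x ≠ v → 1 + srwMean d N g x ≤ g x := by
  have hpos : ∀ k : Torus d N, k ≠ 0 → 0 < 1 - srwEigenvalue k := fun k hk => by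
    have h1 := srwEigenvalue_le hd hk
    have hN : (0 : ℝ) < N := by exact_mod_cast Nat.pos_of_neZero N
    have : 0 < 8 / (d * (N : ℝ) ^ 2) := by positivity
    linarith
  refine ⟨∑ k ∈ ({0} : Finset (Torus d N))ᶜ, (1 - srwEigenvalue k)⁻¹ •
    ((fun _ => (1 : ℝ)) - fun x => torusChar k (x - v)), ?_, fun x hx => ?_⟩
  · refine Finset.sum_nonneg fun k hk => smul_nonneg ?_ ?_
    · exact inv_nonneg.2 (hpos k (by simpa using hk)).le
    · exact fun x => sub_nonneg.2 (cosChar_le_one _)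
  · have h0 : ∑ k ∈ ({0} : Finset (Torus d N))ᶜ, torusChar k (x - v) = -1 := by
      have h1 := sum_torusChar (x - v)
      rw [if_neg (sub_ne_zero.2 hx), Fintype.sum_eq_add_sum_compl (0 : Torus d N)] at h1
      have h2 : torusChar (0 : Torus d N) (x - v) = 1 := by simp [torusChar, cosChar_zero]
      linarith
    refine le_of_eq ?_
    rw [map_sum, Finset.sum_apply, Finset.sum_apply, ← sub_eq_zero, add_sub_assoc,
      ← Finset.sum_sub_distrib, add_comm, ← sub_neg_eq_add, sub_eq_zero, ← h0]
    refine Finset.sum_congr rfl fun k hk => ?_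
    have := (hpos k (by simpa using hk)).ne'
    rw [map_smul, map_sub, srwMean_const hd, srwMean_torusChar]
    simp only [Pi.smul_apply, Pi.sub_apply, smul_eq_mul]
    field_simp
    ring

lemma summable_avoidProb (hd : 0 < d) (hV : V.Nonempty) (x : Torus d N) :
    Summable fun n => avoidProb V n x := by
  obtain ⟨v, hv⟩ := hV
  obtain ⟨g, hg0, hg⟩ := exists_one_add_srwMean_le hd v
  refine summable_of_sum_range_le (c := g x) (fun n => avoidProb_nonneg n x) fun n => ?_
  rw [← Finset.sum_apply]
  exact sum_avoidProb_le hg0 (fun y hy => hg y fun h => hy (h ▸ hv)) n x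

lemma hitMean_eq (hd : 0 < d) (hV : V.Nonempty) :
    hitMean V = Vᶜ.indicator 1 + killedMean V (hitMean V) := by
  have h1 : HasSum (avoidProb V) (hitMean V) :=
    Pi.hasSum.2 fun x => (summable_avoidProb hd hV x).hasSum
  have h2 : HasSum (fun n => avoidProb V (n + 1)) (killedMean V (hitMean V)) := by
    simp only [avoidProb_succ]
    exact (LinearMap.toContinuousLinearMap (killedMean V)).hasSum h1
  have h3 := (hasSum_nat_add_iff 1).1 h2
  rw [Finset.sum_range_one, add_comm] at h3
  exact h1.unique h3

lemma hitMean_of_mem (hd : 0 < d) {x : Torus d N} (hx : x ∈ V) : hitMean V x = 0 := by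
  rw [hitMean_eq hd ⟨x, hx⟩, killedMean_apply]
  simp [hx]

lemma hitMean_of_notMem (hd : 0 < d) (hV : V.Nonempty) {x : Torus d N} (hx : x ∉ V) :
    hitMean V x = 1 + srwMean d N (hitMean V) x := by
  conv_lhs => rw [hitMean_eq hd hV, killedMean_apply]
  simp [hx]

/-- Comparison of subsolutions with the expected entrance time. -/
lemma le_hitMean (hd : 0 < d) (hV : V.Nonempty) {v : Torus d N → ℝ} (hv : ∀ x ∈ V, v x ≤ 0)
    (hv' : ∀ x ∉ V, v x ≤ 1 + srwMean d N v x) (x : Torus d N) : v x ≤ hitMean V x := by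
  set u := v - hitMean V with hu
  obtain ⟨C, hC0, hC⟩ : ∃ C : ℝ, 0 ≤ C ∧ ∀ y, u y ≤ C :=
    ⟨∑ z, |u z|, Finset.sum_nonneg fun _ _ => abs_nonneg _, fun y =>
      (le_abs_self _).trans (Finset.single_le_sum (f := fun z => |u z|)
        (fun _ _ => abs_nonneg _) (Finset.mem_univ y))⟩
  have huV : ∀ y ∈ V, u y ≤ 0 := fun y hy => by
    simpa [hu, hitMean_of_mem hd hy] using hv y hy
  have hun : ∀ n, u ≤ C • avoidProb V n := by
    intro n
    induction n with
    | zero =>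
      intro y
      by_cases hy : y ∈ V
      · simpa [avoidProb, hy] using huV y hy
      · simpa [avoidProb, hy] using hC y
    | succ n ih =>
      intro y
      rw [avoidProb_succ, ← map_smul, killedMean_apply]
      by_cases hy : y ∈ V
      · simpa [hy] using huV y hy
      · rw [Set.indicator_of_mem hy]
        refine le_trans ?_ (srwMean_mono ih y)
        have := hv' y hy
        rw [hu, map_sub, Pi.sub_apply, Pi.sub_apply, hitMean_of_notMem hd hV hy]
        linarith
  have hlim : Tendsto (fun n => C * avoidProb V n x) atTop (nhds (C * 0)) :=
    (summable_avoidProb hd hV x).tendsto_atTop_zero.const_mul C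
  have := ge_of_tendsto' hlim fun n => hun n x
  rw [hu, mul_zero, Pi.sub_apply] at this
  linarith

lemma hitMean_le_lazyMean_pow_add (hd : 0 < d) (hV : V.Nonempty) (n : ℕ) (x : Torus d N) :
    hitMean V x ≤ (lazyMean d N ^ n) (hitMean V) x + n / 2 := by
  induction n generalizing x with
  | zero => simp
  | succ n ih =>
    have h1 : hitMean V x ≤ lazyMean d N (hitMean V) x + 1 / 2 := by
      rw [lazyMean_apply]
      by_cases hx : x ∈ V
      · have := srwMean_mono (show 0 ≤ hitMean V from hitMean_nonneg) x
        rw [map_zero, Pi.zero_apply] at this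
        rw [hitMean_of_mem hd hx]
        linarith
      · linarith [hitMean_of_notMem hd hV hx]
    have h2 : lazyMean d N (hitMean V) x ≤
        lazyMean d N ((lazyMean d N ^ n) (hitMean V) + fun _ => (n / 2 : ℝ)) x :=
      lazyMean_mono (fun y => ih y) x
    rw [map_add, lazyMean_const hd, Pi.add_apply, ← Module.End.mul_apply, ← pow_succ'] at h2
    push_cast
    linarith

lemma lazyMean_pow_hitMean_le (hd : 0 < d) (hV : V.Nonempty) {w : Torus d N → ℝ} {a m : ℝ}
    (hw0 : 0 ≤ w) (hwV : ∀ x ∈ V, 1 ≤ w x) (ha : 0 ≤ a) (hw : ∀ x, srwMean d N w x ≤ w x + a)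
    (hm : ∀ x, hitMean V x ≤ m) (n : ℕ) (x : Torus d N) :
    (lazyMean d N ^ n) (hitMean V) x ≤ hitMean V x + m * (w x + n * a) := by
  have hm0 : 0 ≤ m := (hitMean_nonneg x).trans (hm x)
  induction n generalizing x with
  | zero => simpa using mul_nonneg hm0 (hw0 x)
  | succ n ih =>
    by_cases hx : x ∈ V
    · have h1 := lazyMean_pow_mono (n + 1) (show hitMean V ≤ fun _ => m from hm) x
      have h2 : (lazyMean d N ^ (n + 1)) (fun _ => m) = fun _ => m := by
        rw [Module.End.coe_pow]
        exact Function.iterate_fixed (lazyMean_const hd m) _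
      rw [h2] at h1
      have h3 : 1 ≤ w x + (n + 1 : ℕ) * a := by
        have : 0 ≤ ((n + 1 : ℕ) : ℝ) * a := by positivity
        linarith [hwV x hx]
      linarith [hitMean_nonneg (V := V) x, mul_le_mul_of_nonneg_left h3 hm0]
    · have h1 : lazyMean d N ((lazyMean d N ^ n) (hitMean V)) x ≤
          lazyMean d N (hitMean V + m • (w + fun _ => n * a)) x :=
        lazyMean_mono (fun y => ih y) x
      rw [pow_succ', Module.End.mul_apply]
      refine h1.trans ?_
      rw [map_add, map_smul, map_add, lazyMean_const hd]
      simp only [Pi.add_apply, Pi.smul_apply, smul_eq_mul, lazyMean_apply]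
      have h2 := hitMean_of_notMem hd hV hx
      have h3 : (w x + srwMean d N w x) / 2 + n * a ≤ w x + (n + 1 : ℕ) * a := by
        push_cast
        linarith [hw x]
      linarith [mul_le_mul_of_nonneg_left h3 hm0]

/-- Entrance times barely depend on the starting point, in the presence of a nearly superharmonic
function that is large on the target set. -/
lemma hitMean_near_average (hd : 0 < d) (hV : V.Nonempty) {w : Torus d N → ℝ} {a δ : ℝ} {n : ℕ}
    (hw0 : 0 ≤ w) (hwV : ∀ x ∈ V, 1 ≤ w x) (ha : 0 < a) (hw : ∀ x, srwMean d N w x ≤ w x + a)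
    (hδ : δ ≤ 1 / 4) (hna : n * a ≤ δ)
    (hmix : (N : ℝ) ^ d * Real.exp (-(4 * n / (d * (N : ℝ) ^ 2))) ≤ δ)
    {x₀ : Torus d N} (hx₀ : w x₀ ≤ 1 / 2) :
    0 < (∑ y, hitMean V y) / (N : ℝ) ^ d ∧
    (∀ x, hitMean V x ≤ (1 + 3 * δ) * ((∑ y, hitMean V y) / (N : ℝ) ^ d)) ∧
    ∀ x, w x ≤ δ → (1 - 5 * δ) * ((∑ y, hitMean V y) / (N : ℝ) ^ d) ≤ hitMean V x := by
  have hN : (0 : ℝ) < (N : ℝ) ^ d := pow_pos (by exact_mod_cast Nat.pos_of_neZero N) _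
  obtain ⟨x₁, hx₁⟩ := Finite.exists_max (hitMean V)
  set m := hitMean V x₁ with hm
  have havg := abs_lazyMean_pow_sub_le hd (show 0 ≤ hitMean V from hitMean_nonneg) n
  set A := (∑ y, hitMean V y) / (N : ℝ) ^ d with hA
  have hA0 : 0 ≤ A := div_nonneg (Finset.sum_nonneg fun y _ => hitMean_nonneg y) hN.le
  have havg' : ∀ x, |(lazyMean d N ^ n) (hitMean V) x - A| ≤ δ * A := fun x =>
    (havg x).trans (mul_le_mul_of_nonneg_right hmix hA0)
  have hm_low : 1 / (2 * a) ≤ m := by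
    refine le_trans ?_ (hx₁ x₀)
    have h1 : (1 / a) * (1 - w x₀) ≤ hitMean V x₀ := by
      refine le_hitMean (v := (1 / a) • ((fun _ => (1 : ℝ)) - w)) hd hV (fun x hx => ?_)
        (fun x _ => ?_) x₀
      · exact mul_nonpos_of_nonneg_of_nonpos (by positivity) (by simpa using hwV x hx)
      · rw [map_smul, map_sub, srwMean_const hd]
        simp only [Pi.smul_apply, Pi.sub_apply, smul_eq_mul]
        have : (1 / a) * (srwMean d N w x - w x) ≤ (1 / a) * a :=
          mul_le_mul_of_nonneg_left (by linarith [hw x]) (by positivity)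
        rw [one_div_mul_cancel ha.ne'] at this
        linarith
    refine le_trans ?_ h1
    rw [show 1 / (2 * a) = (1 / a) * (1 / 2) by field_simp]
    exact mul_le_mul_of_nonneg_left (by linarith) (by positivity)
  have hm0 : 0 < m := lt_of_lt_of_le (by positivity) hm_low
  have hn : (n : ℝ) / 2 ≤ δ * m := by
    have h1 : (n : ℝ) / 2 = n * a * (1 / (2 * a)) := by field_simp
    rw [h1]
    exact mul_le_mul hna hm_low (by positivity) (le_trans (by positivity) hna)
  have hupper : ∀ x, hitMean V x ≤ (1 + δ) * A + δ * m := fun x => by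
    have h1 := hitMean_le_lazyMean_pow_add hd hV n x
    have h2 := (abs_le.1 (havg' x)).2
    linarith
  have hδ0 : 0 ≤ δ := le_trans (by positivity) hna
  have hmA : m ≤ 2 * A := by
    have := hupper x₁
    nlinarith
  refine ⟨by linarith, fun x => ?_, fun x hx => ?_⟩
  · have := mul_le_mul_of_nonneg_left hmA hδ0
    linarith [hupper x]
  · have h1 := lazyMean_pow_hitMean_le hd hV hw0 hwV ha.le hw hx₁ n x
    have h2 := (abs_le.1 (havg' x)).1
    have h3 : m * (w x + n * a) ≤ (2 * A) * (2 * δ) :=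
      mul_le_mul hmA (by linarith) (add_nonneg (hw0 x) (by positivity)) (by linarith)
    linarith

end HitMean

/-! ### The continuous-time walk -/

instance (n : ℕ) : DiscreteMeasurableSpace (ZMod n) := ⟨fun _ => trivial⟩

section Neighbours

variable {d N : ℕ}

lemma exists_of_adj {R : Type*} [AddCommGroupWithOne R] {x y : Fin d → R} (h : adj x y) :
    ∃ i, y = x + Pi.single i 1 ∨ y = x - Pi.single i 1 := by
  obtain ⟨-, i, hi, hj⟩ := h
  refine ⟨i, hi.imp (fun h => ?_) fun h => ?_⟩ <;> funext j <;> by_cases hji : j = i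
  · subst hji; simp [h]
  · simp [hji, hj j hji]
  · subst hji; simp [h]
  · simp [hji, hj j hji]

/-- The neighbour of `x` in direction `p.1` and orientation `p.2`. -/
def neighbour (x : Torus d N) (p : Fin d × Bool) : Torus d N :=
  if p.2 then x + Pi.single p.1 1 else x - Pi.single p.1 1

lemma adj_neighbour (hN : 3 ≤ N) (x : Torus d N) (p : Fin d × Bool) : adj x (neighbour x p) := by
  have : Fact (1 < N) := ⟨by omega⟩
  obtain ⟨i, s⟩ := p
  have h1 : neighbour x (i, s) i = if s then x i + 1 else x i - 1 := by
    cases s <;> simp [neighbour]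
  refine ⟨fun h => ?_, i, ?_, fun j hj => ?_⟩
  · have := congrFun h i
    rw [h1] at this
    cases s
    · have h2 : x i - 1 = x i := by simpa using this.symm
      exact one_ne_zero (sub_eq_self.1 h2)
    · simp at this
  · rw [h1]
    cases s <;> simp
  · cases s <;> simp [neighbour, hj]

lemma neighbour_injective (hN : 3 ≤ N) (x : Torus d N) : Function.Injective (neighbour x) := by
  have : Fact (1 < N) := ⟨by omega⟩
  have h2 : (1 : ZMod N) ≠ -1 := fun h => by
    have h3 : ((2 : ℕ) : ZMod N) = 0 := by
      push_cast
      linear_combination h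
    rw [ZMod.natCast_eq_zero_iff] at h3
    exact absurd (Nat.le_of_dvd (by norm_num) h3) (by omega)
  rintro ⟨i, s⟩ ⟨j, t⟩ h
  have h1 : (Pi.single i (if s then 1 else -1) : Torus d N) = Pi.single j (if t then 1 else -1) := by
    cases s <;> cases t <;> simpa [neighbour, sub_eq_add_neg, ← Pi.single_neg] using h
  have hij : i = j := by
    by_contra hij
    have := congrFun h1 i
    rw [Pi.single_eq_same, Pi.single_eq_of_ne hij] at this
    cases s <;> simp at this
  subst hij
  have h3 := Pi.single_injective i h1
  cases s <;> cases t <;> simp_all [h2.symm]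

lemma sum_srwStep_mul [NeZero N] (hN : 3 ≤ N) (f : Torus d N → ℝ) (x : Torus d N) :
    ∑ y, (srwStep x y).toReal * f y = srwMean d N f x := by
  have h1 : ∑ p : Fin d × Bool, f (neighbour x p) / (2 * d) =
      ∑ y, (srwStep x y).toReal * f y := by
    refine Finset.sum_of_injOn (neighbour x) (neighbour_injective hN x).injOn (by simp)
      (fun y _ hy => ?_) fun p _ => ?_
    · rw [srwStep, if_neg, ENNReal.toReal_zero, zero_mul]
      intro hadj
      obtain ⟨i, hi | hi⟩ := exists_of_adj hadj
      · exact hy ⟨(i, true), by simp, by simp [neighbour, hi]⟩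
      · exact hy ⟨(i, false), by simp, by simp [neighbour, hi]⟩
    · rw [srwStep, if_pos (adj_neighbour hN x p), ENNReal.toReal_inv, ENNReal.toReal_natCast]
      push_cast
      ring
  rw [← h1, srwMean_apply, Finset.sum_div, Fintype.sum_prod_type]
  refine Finset.sum_congr rfl fun i _ => ?_
  rw [Fintype.sum_bool, add_div]
  simp [neighbour]

end Neighbours

section WalkLaw

variable {d N : ℕ} {μ : Measure (ℕ → Torus d N)} {init : Torus d N → ℝ≥0∞}

lemma IsWalkLaw.measure_zero_eq (h : IsWalkLaw μ init) (y : Torus d N) :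
    μ {ω | ω 0 = y} = init y := by
  simpa using h.2 0 fun _ => y

variable [NeZero N]

lemma measurableSet_apply_mem (k : ℕ) (s : Set (Torus d N)) :
    MeasurableSet {ω : ℕ → Torus d N | ω k ∈ s} :=
  (measurable_pi_apply (X := fun _ : ℕ => Torus d N) k) (MeasurableSet.of_discrete (s := s))

lemma measurableSet_avoid (V : Set (Torus d N)) (n : ℕ) :
    MeasurableSet {ω : ℕ → Torus d N | ∀ k, k ≤ n → ω k ∉ V} := by
  simp only [Set.ofPred_forall]
  exact MeasurableSet.iInter fun k => MeasurableSet.iInter fun _ => measurableSet_apply_mem k Vᶜ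

/-- The Markov property of the simple random walk. -/
lemma IsWalkLaw.measure_inter_succ (h : IsWalkLaw μ init) {n : ℕ}
    {E : Set (Fin (n + 1) → Torus d N)} {z : Torus d N} (hE : ∀ p ∈ E, p (Fin.last n) = z)
    (y : Torus d N) :
    μ ((fun ω (i : Fin (n + 1)) => ω i) ⁻¹' E ∩ {ω | ω (n + 1) = y}) =
      μ ((fun ω (i : Fin (n + 1)) => ω i) ⁻¹' E) * srwStep z y := by
  set r : (ℕ → Torus d N) → Fin (n + 1) → Torus d N := fun ω i => ω i with hr
  have hrm : Measurable r := measurable_pi_lambda _ fun i => measurable_pi_apply _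
  have hm : ∀ p ∈ E.toFinset, MeasurableSet (r ⁻¹' {p}) := fun p _ =>
    hrm (measurableSet_singleton p)
  have hy : MeasurableSet {ω : ℕ → Torus d N | ω (n + 1) = y} :=
    measurableSet_apply_mem (n + 1) {y}
  have h1 := sum_measure_preimage_singleton (μ := μ) E.toFinset hm
  have h2 := sum_measure_preimage_singleton (μ := μ.restrict {ω | ω (n + 1) = y}) E.toFinset hm
  rw [Set.coe_toFinset] at h1 h2
  rw [Measure.restrict_apply' hy] at h2
  rw [← h1, ← h2, Finset.sum_mul]
  refine Finset.sum_congr rfl fun p hp => ?_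
  rw [Measure.restrict_apply' hy]
  set w : ℕ → Torus d N := fun k => if hk : k < n + 1 then p ⟨k, hk⟩ else y with hw
  have hwn : w n = z := by
    rw [← hE p (by simpa using hp)]
    simp [hw, Fin.last]
  have hwn1 : w (n + 1) = y := by simp [hw]
  have h3 : r ⁻¹' {p} = {ω | ∀ k, k ≤ n → ω k = w k} := by
    ext ω
    simp only [Set.mem_preimage, Set.mem_singleton_iff, Set.mem_ofPred_eq, funext_iff, hr, hw,
      Fin.forall_iff]
    refine forall_congr' fun k => ⟨fun hk hkn => ?_, fun hk hkn => ?_⟩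
    · rw [dif_pos (Nat.lt_succ_of_le hkn)]
      exact hk _
    · have := hk (Nat.le_of_lt_succ hkn)
      rwa [dif_pos hkn] at this
  have h4 : r ⁻¹' {p} ∩ {ω | ω (n + 1) = y} = {ω | ∀ k, k ≤ n + 1 → ω k = w k} := by
    ext ω
    simp only [h3, Set.mem_inter_iff, Set.mem_ofPred_eq, Nat.le_succ_iff, or_imp, forall_and,
      forall_eq, hwn1]
  rw [h4, h3, h.2, h.2, Finset.prod_range_succ, hwn, hwn1, mul_assoc]

lemma not_isWalkLaw_pointInit_two (hd : 0 < d) (μ : Measure (ℕ → Torus d 2)) (x : Torus d 2) :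
    ¬ IsWalkLaw μ (pointInit x) := by
  intro h
  have hμ := h.1
  have h0 : μ {ω | ω 0 = x} = 1 := by simp [h.measure_zero_eq, pointInit]
  have h1 : ∀ y, μ ({ω | ω 0 = x} ∩ {ω | ω 1 = y}) = srwStep x y := fun y => by
    have := h.measure_inter_succ (n := 0) (E := {p | p 0 = x}) (z := x) (fun p hp => hp) y
    rw [← one_mul (srwStep x y), ← h0]
    exact this
  have h2 : ∑ y, srwStep x y = 1 := by
    have h3 := sum_measure_preimage_singleton (μ := μ.restrict {ω | ω 0 = x}) Finset.univ
      (f := fun ω => ω 1) fun y _ => measurable_pi_apply 1 (measurableSet_singleton y)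
    have h4 : MeasurableSet {ω : ℕ → Torus d 2 | ω 0 = x} :=
      measurableSet_apply_mem 0 {x}
    simp only [Measure.restrict_apply' h4, Finset.coe_univ, Set.preimage_univ, Set.univ_inter,
      h0] at h3
    rw [← h3]
    refine Finset.sum_congr rfl fun y _ => ?_
    rw [← h1, Set.inter_comm]
    rfl
  have h5 : ∑ y, srwStep x y ≤ ∑ i : Fin d, ((2 * d : ℕ) : ℝ≥0∞)⁻¹ := by
    have h6 : ∀ y, srwStep x y ≤
        ∑ i : Fin d, if y = x + Pi.single i 1 then ((2 * d : ℕ) : ℝ≥0∞)⁻¹ else 0 := fun y => by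
      by_cases hy : adj x y
      · rw [srwStep, if_pos hy]
        obtain ⟨i, hi⟩ := exists_of_adj hy
        have hi' : y = x + Pi.single i 1 := by
          rcases hi with hi | hi
          · exact hi
          · rw [hi, sub_eq_add_neg, ← Pi.single_neg]
            rfl
        refine le_trans ?_ (Finset.single_le_sum (fun _ _ => zero_le) (Finset.mem_univ i))
        rw [if_pos hi']
      · rw [srwStep, if_neg hy]
        exact zero_le
    refine (Finset.sum_le_sum fun y _ => h6 y).trans ?_
    rw [Finset.sum_comm]
    simp
  rw [h2] at h5
  have h7 : (1 : ℝ≥0∞) ≤ 2⁻¹ := by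
    refine h5.trans (le_of_eq ?_)
    have hd0 : (d : ℝ≥0∞) ≠ 0 := by exact_mod_cast hd.ne'
    rw [Finset.sum_const, Finset.card_univ, Fintype.card_fin, nsmul_eq_mul]
    push_cast
    rw [ENNReal.mul_inv (Or.inl (by norm_num)) (Or.inl (by norm_num)), mul_left_comm,
      ENNReal.mul_inv_cancel hd0 (ENNReal.natCast_ne_top d), mul_one]
  exact absurd h7 (not_le.2 ENNReal.one_half_lt_one)

lemma IsWalkLaw.sum_avoid_mul (h : IsWalkLaw μ init) (hN : 3 ≤ N) (V : Set (Torus d N)) (n : ℕ)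
    (F : Torus d N → ℝ) :
    ∑ y, μ.real {ω | (∀ k, k ≤ n → ω k ∉ V) ∧ ω n = y} * F y =
      ∑ x, (init x).toReal * (killedMean V ^ n) (Vᶜ.indicator F) x := by
  have hμ := h.1
  induction n generalizing F with
  | zero =>
    refine Finset.sum_congr rfl fun y _ => ?_
    by_cases hy : y ∈ V
    · have : {ω : ℕ → Torus d N | (∀ k, k ≤ 0 → ω k ∉ V) ∧ ω 0 = y} = ∅ := by
        ext ω
        simp only [Nat.le_zero, forall_eq, Set.mem_ofPred_eq, Set.mem_empty_iff_false, iff_false]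
        rintro ⟨h1, rfl⟩
        exact h1 hy
      rw [this]
      simp [hy]
    · have : {ω : ℕ → Torus d N | (∀ k, k ≤ 0 → ω k ∉ V) ∧ ω 0 = y} = {ω | ω 0 = y} := by
        ext ω
        simp only [Nat.le_zero, forall_eq, Set.mem_ofPred_eq, and_iff_right_iff_imp]
        rintro rfl
        exact hy
      rw [this, Measure.real, h.measure_zero_eq]
      simp [hy]
  | succ n ih =>
    have h1 : ∀ y, μ.real {ω | (∀ k, k ≤ n + 1 → ω k ∉ V) ∧ ω (n + 1) = y} * F y =
        ∑ z, μ.real {ω | (∀ k, k ≤ n → ω k ∉ V) ∧ ω n = z} *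
          ((srwStep z y).toReal * Vᶜ.indicator F y) := fun y => by
      by_cases hy : y ∈ V
      · have : {ω : ℕ → Torus d N | (∀ k, k ≤ n + 1 → ω k ∉ V) ∧ ω (n + 1) = y} = ∅ := by
          ext ω
          simp only [Set.mem_ofPred_eq, Set.mem_empty_iff_false, iff_false]
          rintro ⟨h1, rfl⟩
          exact h1 _ le_rfl hy
        rw [this]
        simp [hy]
      · rw [Set.indicator_of_mem hy]
        simp only [← mul_assoc]
        rw [← Finset.sum_mul]
        congr 1
        have hS : MeasurableSet {ω : ℕ → Torus d N | (∀ k, k ≤ n + 1 → ω k ∉ V) ∧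
            ω (n + 1) = y} := by
          exact MeasurableSet.inter (measurableSet_avoid V (n + 1))
            (measurableSet_apply_mem (n + 1) {y})
        have h2 := sum_measure_preimage_singleton (f := fun ω : ℕ → Torus d N => ω n)
          (μ := μ.restrict {ω : ℕ → Torus d N | (∀ k, k ≤ n + 1 → ω k ∉ V) ∧
            ω (n + 1) = y}) Finset.univ fun z _ =>
              measurable_pi_apply n (measurableSet_singleton z)
        simp only [Measure.restrict_apply' hS, Finset.coe_univ, Set.preimage_univ,
          Set.univ_inter] at h2
        rw [Measure.real, ← h2, ENNReal.toReal_sum fun _ _ => measure_ne_top _ _]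
        refine Finset.sum_congr rfl fun z _ => ?_
        have h3 := h.measure_inter_succ (n := n)
          (E := {p | (∀ k, p k ∉ V) ∧ p (Fin.last n) = z}) (fun p hp => hp.2) y
        rw [Measure.real, ← ENNReal.toReal_mul]
        congr 1
        have h4 : (fun (ω : ℕ → Torus d N) (i : Fin (n + 1)) => ω i) ⁻¹'
            {p : Fin (n + 1) → Torus d N | (∀ k, p k ∉ V) ∧ p (Fin.last n) = z} =
            {ω | (∀ k, k ≤ n → ω k ∉ V) ∧ ω n = z} := by
          ext ω
          simp [Fin.forall_iff]
        rw [h4] at h3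
        rw [← h3]
        congr 1
        ext ω
        simp only [Set.mem_inter_iff, Set.mem_preimage, Set.mem_singleton_iff, Set.mem_ofPred_eq,
          Nat.le_succ_iff, or_imp, forall_and, forall_eq]
        constructor
        · rintro ⟨rfl, ⟨h5, -⟩, rfl⟩
          exact ⟨⟨h5, rfl⟩, rfl⟩
        · rintro ⟨⟨h5, rfl⟩, rfl⟩
          exact ⟨rfl, ⟨h5, hy⟩, rfl⟩
    simp only [h1]
    rw [Finset.sum_comm]
    simp only [← Finset.mul_sum, sum_srwStep_mul hN]
    rw [ih, pow_succ]
    rfl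

lemma IsWalkLaw.measureReal_avoid (h : IsWalkLaw μ init) (hN : 3 ≤ N) (V : Set (Torus d N))
    (n : ℕ) :
    μ.real {ω | ∀ k, k ≤ n → ω k ∉ V} = ∑ x, (init x).toReal * avoidProb V n x := by
  have hμ := h.1
  have h1 := sum_measure_preimage_singleton (f := fun ω : ℕ → Torus d N => ω n)
    (μ := μ.restrict {ω : ℕ → Torus d N | ∀ k, k ≤ n → ω k ∉ V}) Finset.univ fun z _ =>
      measurable_pi_apply n (measurableSet_singleton z)
  simp only [Measure.restrict_apply' (measurableSet_avoid V n), Finset.coe_univ, Set.preimage_univ,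
    Set.univ_inter] at h1
  rw [Measure.real, ← h1, ENNReal.toReal_sum fun _ _ => measure_ne_top _ _]
  rw [avoidProb, ← h.sum_avoid_mul hN]
  refine Finset.sum_congr rfl fun y _ => ?_
  rw [Pi.one_apply, mul_one, Set.inter_comm]
  rfl

end WalkLaw

section ExponentialClock

variable {ν : Measure (ℕ → ℝ)}

lemma IsIIDExp.ae_pos (h : IsIIDExp ν) : ∀ᵐ g ∂ν, ∀ k, 0 < g k := by
  have hν := h.1
  refine ae_all_iff.2 fun n => ?_
  have h1 := h.2 n 0 fun _ => le_rfl
  simp only [Pi.zero_apply, Finset.sum_const_zero, neg_zero, Real.exp_zero,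
    ENNReal.ofReal_one] at h1
  have h2 : ∀ᵐ g ∂ν, ∀ k, k ≤ n → 0 < g k := (prob_compl_eq_zero_iff (by measurability)).2 h1
  exact h2.mono fun g hg => hg n le_rfl

lemma IsIIDExp.measure_lt (h : IsIIDExp ν) (n : ℕ) {s : ℝ} (hs : 0 ≤ s) :
    ν {g | s < g n} = ENNReal.ofReal (Real.exp (-s)) := by
  have h1 := h.2 n (Pi.single n s) fun k => by
    rcases eq_or_ne k n with rfl | hk <;> simp [*]
  rw [Finset.sum_pi_single', if_pos (Finset.self_mem_range_succ n)] at h1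
  rw [← h1]
  refine measure_congr ?_
  filter_upwards [h.ae_pos] with g hg
  refine propext ⟨fun (hgn : s < g n) k _ => ?_, fun hg' => ?_⟩
  · rcases eq_or_ne k n with rfl | hk <;> simp [*]
  · have h2 : (Pi.single n s : ℕ → ℝ) n < g n := hg' n le_rfl
    rwa [Pi.single_eq_same] at h2

lemma IsIIDExp.lintegral_ofReal (h : IsIIDExp ν) (n : ℕ) :
    ∫⁻ g, ENNReal.ofReal (g n) ∂ν = 1 := by
  rw [lintegral_eq_lintegral_meas_lt ν (h.ae_pos.mono fun g hg => (hg n).le)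
    (measurable_pi_apply n).aemeasurable,
    setLIntegral_congr_fun measurableSet_Ioi fun s hs => h.measure_lt n (le_of_lt hs),
    ← ofReal_integral_eq_lintegral_ofReal (integrableOn_exp_neg_Ioi 0)
      (ae_of_all _ fun s => (Real.exp_pos _).le), integral_exp_neg_Ioi_zero, ENNReal.ofReal_one]

end ExponentialClock

section EntranceTime

variable {d N : ℕ} {V : Set (Torus d N)}

lemma hitT_eq_sum {ω : ℕ → Torus d N} {g : ℕ → ℝ} (hg : ∀ k, 0 < g k) {n : ℕ} (hn : ω n ∈ V)
    (hlt : ∀ k < n, ω k ∉ V) : hitT V (ω, g) = ∑ k ∈ Finset.range n, g k := by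
  have hmono : StrictMono fun m => ∑ k ∈ Finset.range m, g k :=
    strictMono_nat_of_lt_succ fun m => by
      rw [Finset.sum_range_succ]
      linarith [hg m]
  refine IsLeast.csInf_eq ⟨⟨Finset.sum_nonneg fun k _ => (hg k).le, ?_⟩, ?_⟩
  · have : nJumps g (∑ k ∈ Finset.range n, g k) = n :=
      IsGreatest.csSup_eq ⟨le_refl (∑ k ∈ Finset.range n, g k), fun m hm => hmono.le_iff_le.1 hm⟩
    rw [ctPos, this]
    exact hn
  · rintro t ⟨ht0, htV⟩
    by_contra! hlt'
    have hbdd : ∀ m ∈ {m | ∑ k ∈ Finset.range m, g k ≤ t}, m < n := fun m hm =>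
      hmono.lt_iff_lt.1 (lt_of_le_of_lt hm hlt')
    have hmem : nJumps g t ∈ {m | ∑ k ∈ Finset.range m, g k ≤ t} :=
      Nat.sSup_mem ⟨0, by simpa using ht0⟩ ⟨n, fun m hm => (hbdd m hm).le⟩
    exact hlt _ (hbdd _ hmem) htV

variable [NeZero N]

/-- The expected entrance time of the continuous-time walk. -/
lemma IsCTWalk.integral_hitT {P : Measure (CTPath d N)} {init : Torus d N → ℝ≥0∞}
    (h : IsCTWalk P init) (hd : 0 < d) (hN : 3 ≤ N) (hV : V.Nonempty) :
    ∫ ω, hitT V ω ∂P = ∑ x, (init x).toReal * hitMean V x := by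
  obtain ⟨μ, ν, hμ, hν, rfl⟩ := h
  have hμP := hμ.1
  have hνP := hν.1
  set A : ℕ → Set (ℕ → Torus d N) := fun n => {ω | ∀ k, k ≤ n → ω k ∉ V} with hA
  have hsum : HasSum (fun n => μ.real (A n)) (∑ x, (init x).toReal * hitMean V x) := by
    simp only [hA, hμ.measureReal_avoid hN]
    exact hasSum_sum fun x _ => (summable_avoidProb hd hV x).hasSum.mul_left _
  have hfin : ∀ᵐ ω ∂μ, ∃ n, ω n ∈ V := by
    have h1 : μ.real (⋂ n, A n) ≤ 0 :=
      ge_of_tendsto' hsum.summable.tendsto_atTop_zero fun n =>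
        measureReal_mono (Set.iInter_subset A n)
    have h2 : μ (⋂ n, A n) = 0 :=
      (measureReal_eq_zero_iff).1 (le_antisymm h1 measureReal_nonneg)
    refine measure_mono_null (fun ω hω => ?_) h2
    simp only [Set.mem_compl_iff, Set.mem_ofPred_eq, not_exists] at hω
    exact Set.mem_iInter.2 fun n k _ => hω k
  set F : ℕ → CTPath d N → ℝ≥0∞ := fun n ω =>
    (A n).indicator 1 ω.1 * ENNReal.ofReal (ω.2 n) with hF
  have hFm : ∀ n, Measurable (F n) := fun n => by
    refine Measurable.mul ?_ ?_
    · exact (measurable_one.indicator (measurableSet_avoid V n)).comp measurable_fst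
    · exact ((measurable_pi_apply n).comp measurable_snd).ennreal_ofReal
  have hpath : ∀ᵐ ω ∂μ.prod ν, ∑' n, F n ω ≠ ∞ ∧ hitT V ω = (∑' n, F n ω).toReal := by
    have h1 : ∀ᵐ ω ∂μ.prod ν, ∃ n, ω.1 n ∈ V := Measure.quasiMeasurePreserving_fst.ae hfin
    have h2 : ∀ᵐ ω ∂μ.prod ν, ∀ k, 0 < ω.2 k :=
      Measure.quasiMeasurePreserving_snd.ae hν.ae_pos
    filter_upwards [h1, h2] with ω hω hg
    have hlt : ∀ k < Nat.find hω, ω.1 k ∉ V := fun k hk => Nat.find_min hω hk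
    have h3 : ∑' n, F n ω = ∑ k ∈ Finset.range (Nat.find hω), ENNReal.ofReal (ω.2 k) := by
      rw [tsum_eq_sum (s := Finset.range (Nat.find hω)) fun k hk => ?_]
      · refine Finset.sum_congr rfl fun k hk => ?_
        have : ω.1 ∈ A k := fun j hj => hlt j (hj.trans_lt (Finset.mem_range.1 hk))
        simp [hF, this]
      · have : ω.1 ∉ A k := fun hk' =>
          hk' _ (not_lt.1 fun h => hk (Finset.mem_range.2 h)) (Nat.find_spec hω)
        simp [hF, this]
    have h4 : ∀ k ∈ Finset.range (Nat.find hω), ENNReal.ofReal (ω.2 k) ≠ ∞ := fun _ _ =>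
      ENNReal.ofReal_ne_top
    rw [h3]
    refine ⟨ENNReal.sum_ne_top.2 h4, ?_⟩
    rw [ENNReal.toReal_sum h4]
    simp only [ENNReal.toReal_ofReal (hg _).le]
    exact hitT_eq_sum hg (Nat.find_spec hω) hlt
  have hFint : ∀ n, ∫⁻ ω, F n ω ∂μ.prod ν = μ (A n) := fun n => by
    simp only [hF]
    rw [lintegral_prod_mul (f := (A n).indicator 1) (g := fun g : ℕ → ℝ => ENNReal.ofReal (g n))
      (measurable_one.indicator (measurableSet_avoid V n)).aemeasurable
      (measurable_pi_apply n).ennreal_ofReal.aemeasurable, hν.lintegral_ofReal, mul_one,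
      lintegral_indicator_one (measurableSet_avoid V n)]
  rw [integral_congr_ae (hpath.mono fun ω hω => hω.2),
    integral_toReal (Measurable.tsum hFm).aemeasurable
      (hpath.mono fun ω hω => lt_top_iff_ne_top.2 hω.1),
    lintegral_tsum fun n => (hFm n).aemeasurable, ← hsum.tsum_eq]
  simp only [hFint]
  exact ENNReal.tsum_toReal_eq fun n => measure_ne_top _ _

end EntranceTime

/-! ### Comparison of entrance times -/

lemma eventually_pow_mul_exp_le {d : ℕ} (hd : 0 < d) {η : ℝ} (hη : 0 < η) :
    ∀ᶠ x : ℝ in atTop, x ^ d * Real.exp (-(4 / d * x ^ η)) ≤ x ^ (-η) := by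
  have h1 := (isLittleO_exp_neg_mul_rpow_atTop (a := 4 / d) (by positivity)
    (-(d + η) / η)).def one_pos
  filter_upwards [(tendsto_rpow_atTop hη).eventually h1, eventually_gt_atTop 0] with x hx hx0
  rw [Real.norm_of_nonneg (Real.exp_pos _).le, Real.norm_of_nonneg (by positivity), one_mul,
    ← Real.rpow_mul hx0.le, mul_div_cancel₀ _ hη.ne', neg_mul] at hx
  refine (mul_le_mul_of_nonneg_left hx (by positivity)).trans_eq ?_
  rw [← Real.rpow_natCast x d, ← Real.rpow_add hx0]
  congr 1
  ring

lemma exists_notMem_torusBall {d N : ℕ} [NeZero N] (hd : 0 < d) (hN : 3 ≤ N) :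
    ∃ x : Torus d N, x ∉ torusBall 0 ((N : ℝ) / 4) := by
  refine ⟨fun _ => (N / 2 : ℕ), fun h => ?_⟩
  have h1 : (torusDist 0 (fun _ => (N / 2 : ℕ) : Torus d N) : ℝ) ≤ N / 4 := h
  have h2 : N / 2 ≤ circleNorm ((N / 2 : ℕ) : ZMod N) := by
    have h3 : ((N / 2 : ℕ) : ZMod N).val = N / 2 := ZMod.val_cast_of_lt (by omega)
    have : NeZero ((N / 2 : ℕ) : ZMod N) := ⟨fun h0 => by
      rw [h0, ZMod.val_zero] at h3
      omega⟩
    rw [circleNorm, ZMod.val_neg_of_ne_zero, h3]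
    omega
  have h3 : N / 2 ≤ torusDist 0 (fun _ => (N / 2 : ℕ) : Torus d N) := by
    rw [torusDist_zero_left]
    exact h2.trans (Finset.le_sup (f := fun _ : Fin d => circleNorm ((N / 2 : ℕ) : ZMod N))
      (Finset.mem_univ ⟨0, hd⟩))
  have h4 : (4 * torusDist 0 (fun _ => (N / 2 : ℕ) : Torus d N) : ℝ) ≤ N := by linarith
  norm_cast at h4
  omega

lemma hitMean_near_average_of_large {d N : ℕ} [NeZero N] (hd : 3 ≤ d) (hN : 3 ≤ N) {ε : ℝ}
    (hε : 0 < ε)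
    (hmix : (N : ℝ) ^ d * Real.exp (-(4 / d * (N : ℝ) ^ (ε / 4))) ≤ (N : ℝ) ^ (-(ε / 4)))
    {δ : ℝ} (hδ : δ = 40 * (8020 * d : ℝ) ^ (1 / 4 : ℝ) * (N : ℝ) ^ (-(ε / 4)))
    (hδ' : δ ≤ 1 / 4) {rN : ℝ} (hr1 : 1 ≤ rN) (hr : rN ≤ (N : ℝ) ^ (1 - ε))
    {V : Set (Torus d N)} (hV : V.Nonempty) (hVr : V ⊆ torusBall 0 rN) :
    0 < (∑ y, hitMean V y) / (N : ℝ) ^ d ∧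
    (∀ x, hitMean V x ≤ (1 + 3 * δ) * ((∑ y, hitMean V y) / (N : ℝ) ^ d)) ∧
    ∀ x, x ∉ torusBall (0 : Torus d N) ((N : ℝ) ^ (1 - ε / 2)) →
      (1 - 5 * δ) * ((∑ y, hitMean V y) / (N : ℝ) ^ d) ≤ hitMean V x := by
  have hN0 : (0 : ℝ) < N := by exact_mod_cast Nat.pos_of_neZero N
  have hN1 : (1 : ℝ) ≤ N := by exact_mod_cast Nat.pos_of_neZero N
  have hd0 : (1 : ℝ) ≤ d := by exact_mod_cast (by omega : 1 ≤ d)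
  have hχ : ∀ y : Torus d N, 0 < chordSqReg y := chordSqReg_pos (by omega) (by omega)
  have hβ := one_sub_cosChar_one_pos (N := N) (by omega)
  set K : ℝ := (8020 * d : ℝ) ^ (1 / 4 : ℝ) with hK
  have hK1 : 1 ≤ K := Real.one_le_rpow (by linarith) (by norm_num)
  set q : ℝ := K * (N : ℝ) ^ (-(ε / 2)) with hq
  have hq0 : 0 < q := by positivity
  set w : Torus d N → ℝ := q • fun y => chordSqReg y ^ (-(1 / 4) : ℝ) with hw
  have hoff : ∀ x, x ∉ torusBall (0 : Torus d N) ((N : ℝ) ^ (1 - ε / 2)) → w x ≤ δ := by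
    intro x hx
    have h1 := le_chordSqReg_of_notMem_torusBall (by positivity) hx
    have h2 : ((N : ℝ) ^ (1 - ε / 2) / N) ^ 2 = (N : ℝ) ^ (-ε) := by
      nth_rewrite 2 [← Real.rpow_one (N : ℝ)]
      rw [← Real.rpow_sub hN0, ← Real.rpow_natCast, ← Real.rpow_mul hN0.le]
      congr 1
      push_cast
      ring
    have h3 : (N : ℝ) ^ (-ε) ≤ chordSqReg x := by
      have : 0 < (N : ℝ) ^ (-ε) := by positivity
      rw [h2] at h1
      linarith
    have h4 : chordSqReg x ^ (-(1 / 4) : ℝ) ≤ (N : ℝ) ^ (ε / 4) := by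
      refine (Real.rpow_le_rpow_of_nonpos (by positivity) h3 (by norm_num)).trans_eq ?_
      rw [← Real.rpow_mul hN0.le]
      congr 1
      ring
    have h5 : (N : ℝ) ^ (-(ε / 2)) * (N : ℝ) ^ (ε / 4) = (N : ℝ) ^ (-(ε / 4)) := by
      rw [← Real.rpow_add hN0]
      congr 1
      ring
    calc w x = q * chordSqReg x ^ (-(1 / 4) : ℝ) := rfl
      _ ≤ q * (N : ℝ) ^ (ε / 4) := mul_le_mul_of_nonneg_left h4 hq0.le
      _ = K * (N : ℝ) ^ (-(ε / 4)) := by rw [hq, mul_assoc, h5]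
      _ ≤ δ := by
        have : 0 < K * (N : ℝ) ^ (-(ε / 4)) := by positivity
        rw [hδ, mul_assoc]
        linarith
  obtain ⟨x₀, hx₀⟩ := exists_notMem_torusBall (d := d) (by omega) hN
  have hx₀B : x₀ ∉ torusBall (0 : Torus d N) ((N : ℝ) ^ (1 - ε / 2)) := fun h => by
    refine hx₀ (show (torusDist 0 x₀ : ℝ) ≤ N / 4 from le_trans (show _ ≤ _ from h) ?_)
    have h1 : (N : ℝ) ^ (-(ε / 2)) ≤ (N : ℝ) ^ (-(ε / 4)) :=
      Real.rpow_le_rpow_of_exponent_le hN1 (by linarith)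
    have h2 : (N : ℝ) ^ (-(ε / 4)) ≤ 1 / 4 := by
      have h3 : 0 < (N : ℝ) ^ (-(ε / 4)) := by positivity
      nlinarith
    rw [sub_eq_add_neg, Real.rpow_add hN0, Real.rpow_one]
    nlinarith
  set n : ℕ := ⌈(N : ℝ) ^ (2 + ε / 4)⌉₊ with hn
  have hn_low : (N : ℝ) ^ (2 + ε / 4) ≤ n := Nat.le_ceil _
  have hpow : (N : ℝ) ^ (2 + ε / 4) = (N : ℝ) ^ 2 * (N : ℝ) ^ (ε / 4) := by
    rw [Real.rpow_add hN0, ← Real.rpow_natCast]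
    norm_num
  have hn_high : (n : ℝ) ≤ 2 * (N : ℝ) ^ (2 + ε / 4) := by
    have h1 := Nat.ceil_lt_add_one (show 0 ≤ (N : ℝ) ^ (2 + ε / 4) by positivity)
    have h2 : 1 ≤ (N : ℝ) ^ (2 + ε / 4) := Real.one_le_rpow hN1 (by linarith)
    linarith
  refine (hitMean_near_average (d := d) (N := N) (V := V) (w := w)
    (a := q * (1 - cosChar (1 : ZMod N))) (δ := δ) (n := n) (x₀ := x₀) (by omega) hV
    (fun x => mul_nonneg hq0.le (Real.rpow_nonneg (hχ x).le _)) ?_ (mul_pos hq0 hβ) ?_ hδ' ?_ ?_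
    ?_).imp_right fun h => h.imp_right fun h x hx => h x (hoff x hx)
  · intro x hx
    have h1 := chordSqReg_le_of_mem_torusBall (by omega) hr1 (hVr hx)
    have h2 : (rN / N) ^ 2 ≤ (N : ℝ) ^ (-(2 * ε)) := by
      have h3 : rN / N ≤ (N : ℝ) ^ (-ε) := by
        rw [div_le_iff₀ hN0]
        refine hr.trans_eq ?_
        rw [sub_eq_neg_add, Real.rpow_add hN0, Real.rpow_one]
      refine (pow_le_pow_left₀ (by positivity) h3 2).trans_eq ?_
      rw [← Real.rpow_natCast, ← Real.rpow_mul hN0.le]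
      congr 1
      push_cast
      ring
    have h3 : chordSqReg x ≤ 8020 * d * (N : ℝ) ^ (-(2 * ε)) :=
      h1.trans (mul_le_mul_of_nonneg_left h2 (by positivity))
    have h4 : chordSqReg x ^ (1 / 4 : ℝ) ≤ q := by
      refine (Real.rpow_le_rpow (hχ x).le h3 (by norm_num)).trans_eq ?_
      rw [Real.mul_rpow (by positivity) (by positivity), ← Real.rpow_mul hN0.le, hq]
      congr 2
      ring
    change 1 ≤ q * chordSqReg x ^ (-(1 / 4) : ℝ)
    rw [Real.rpow_neg (hχ x).le, ← div_eq_mul_inv,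
      one_le_div (Real.rpow_pos_of_pos (hχ x) _)]
    exact h4
  · intro x
    rw [hw, map_smul]
    simp only [Pi.smul_apply, smul_eq_mul, ← mul_add]
    exact mul_le_mul_of_nonneg_left (srwMean_rpow_chordSqReg_le hd (by omega) x) hq0.le
  · have h1 := one_sub_cosChar_one_le (N := N) (by omega)
    have h5 : (N : ℝ) ^ (-(ε / 2)) * (N : ℝ) ^ (ε / 4) = (N : ℝ) ^ (-(ε / 4)) := by
      rw [← Real.rpow_add hN0]
      congr 1
      ring
    calc (n : ℝ) * (q * (1 - cosChar (1 : ZMod N)))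
        ≤ (2 * (N : ℝ) ^ (2 + ε / 4)) * (q * (20 * (1 / N : ℝ) ^ 2)) := by gcongr
      _ = 40 * K * ((N : ℝ) ^ (-(ε / 2)) * (N : ℝ) ^ (ε / 4)) := by
        rw [hpow, hq]
        field_simp
        ring
      _ = δ := by rw [h5, hδ]
  · have h1 : 4 / d * (N : ℝ) ^ (ε / 4) ≤ 4 * n / (d * (N : ℝ) ^ 2) := by
      rw [hpow] at hn_low
      rw [le_div_iff₀ (by positivity)]
      calc 4 / d * (N : ℝ) ^ (ε / 4) * (d * (N : ℝ) ^ 2)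
          = 4 * ((N : ℝ) ^ 2 * (N : ℝ) ^ (ε / 4)) := by field_simp
        _ ≤ 4 * (n : ℝ) := by linarith
    calc (N : ℝ) ^ d * Real.exp (-(4 * n / (d * (N : ℝ) ^ 2)))
        ≤ (N : ℝ) ^ d * Real.exp (-(4 / d * (N : ℝ) ^ (ε / 4))) := by gcongr
      _ ≤ (N : ℝ) ^ (-(ε / 4)) := hmix
      _ ≤ δ := by
        have h3 : 0 < (N : ℝ) ^ (-(ε / 4)) := by positivity
        rw [hδ]
        nlinarith
  · linarith [hoff x₀ hx₀B]

lemma abs_one_sub_hitMean_div_le {d N : ℕ} [NeZero N] (V : Set (Torus d N)) (x : Torus d N) :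
    |1 - hitMean V x / ((∑ y, hitMean V y) / (N : ℝ) ^ d)| ≤ (N : ℝ) ^ d := by
  have hN1 : (1 : ℝ) ≤ (N : ℝ) ^ d := one_le_pow₀ (by exact_mod_cast Nat.pos_of_neZero N)
  have h0 : 0 ≤ (∑ y, hitMean V y) / (N : ℝ) ^ d :=
    div_nonneg (Finset.sum_nonneg fun y _ => hitMean_nonneg y) (by positivity)
  have h1 : 0 ≤ hitMean V x / ((∑ y, hitMean V y) / (N : ℝ) ^ d) :=
    div_nonneg (hitMean_nonneg x) h0
  have h2 : hitMean V x / ((∑ y, hitMean V y) / (N : ℝ) ^ d) ≤ (N : ℝ) ^ d := by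
    refine div_le_of_le_mul₀ h0 (by positivity) ?_
    rw [mul_div_cancel₀ _ (by positivity)]
    exact Finset.single_le_sum (fun y _ => hitMean_nonneg y) (Finset.mem_univ x)
  exact abs_le.2 ⟨by linarith, by linarith⟩

lemma hitMean_ratio_bounds (d : ℕ) (hd : 3 ≤ d) {ε : ℝ} (hε : 0 < ε) :
    ∃ c : ℝ, 0 < c ∧ ∀ N : ℕ, ∀ _ : NeZero N, 3 ≤ N →
      ∀ rN : ℝ, 1 ≤ rN → rN ≤ (N : ℝ) ^ (1 - ε) →
        ∀ V : Set (Torus d N), V.Nonempty → V ⊆ torusBall (0 : Torus d N) rN →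
          (∀ x, -(c * (N : ℝ) ^ (-(ε / 4))) ≤
            1 - hitMean V x / ((∑ y, hitMean V y) / (N : ℝ) ^ d)) ∧
          ∀ x, x ∉ torusBall (0 : Torus d N) ((N : ℝ) ^ (1 - ε / 2)) →
            |1 - hitMean V x / ((∑ y, hitMean V y) / (N : ℝ) ^ d)| ≤
              c * (N : ℝ) ^ (-(ε / 4)) := by
  set C : ℝ := 40 * (8020 * d : ℝ) ^ (1 / 4 : ℝ) with hC
  have hC0 : 0 ≤ C := by positivity
  have hlarge : ∀ᶠ x : ℝ in atTop,
      x ^ d * Real.exp (-(4 / d * x ^ (ε / 4))) ≤ x ^ (-(ε / 4)) ∧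
        C * x ^ (-(ε / 4)) ≤ 1 / 4 := by
    refine (eventually_pow_mul_exp_le (by omega) (by positivity)).and ?_
    have := (tendsto_rpow_neg_atTop (show 0 < ε / 4 by positivity)).const_mul C
    rw [mul_zero] at this
    exact this.eventually_le_const (by norm_num)
  obtain ⟨N₀, hN₀⟩ := eventually_atTop.1 (tendsto_natCast_atTop_atTop.eventually hlarge)
  refine ⟨5 * C + (N₀ : ℝ) ^ d * (N₀ : ℝ) ^ (ε / 4) + 1, by positivity,
    fun N _ hN rN hr1 hr V hV hVr => ?_⟩
  have hN0 : (0 : ℝ) < N := by exact_mod_cast Nat.pos_of_neZero N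
  have hpos : 0 < (N : ℝ) ^ (-(ε / 4)) := by positivity
  have hM : 0 ≤ (N₀ : ℝ) ^ d * (N₀ : ℝ) ^ (ε / 4) := by positivity
  rcases le_total N₀ N with hle | hle
  · obtain ⟨hmix, hδ⟩ := hN₀ N hle
    obtain ⟨h1, h2, h3⟩ := hitMean_near_average_of_large hd hN hε hmix rfl hδ hr1 hr hV hVr
    have h4 : 5 * (C * (N : ℝ) ^ (-(ε / 4))) ≤
        (5 * C + (N₀ : ℝ) ^ d * (N₀ : ℝ) ^ (ε / 4) + 1) * (N : ℝ) ^ (-(ε / 4)) := by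
      rw [← mul_assoc]
      gcongr
      linarith
    have h5 : 0 ≤ C * (N : ℝ) ^ (-(ε / 4)) := by positivity
    have h6 : ∀ x, hitMean V x / ((∑ y, hitMean V y) / (N : ℝ) ^ d) ≤
        1 + 3 * (C * (N : ℝ) ^ (-(ε / 4))) := fun x => (div_le_iff₀ h1).2 (h2 x)
    refine ⟨fun x => by linarith [h6 x], fun x hx => abs_le.2 ⟨by linarith [h6 x], ?_⟩⟩
    have h7 := (le_div_iff₀ h1).2 (h3 x hx)
    linarith
  · have hle' : (N : ℝ) ≤ N₀ := by exact_mod_cast hle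
    have h1 : (N : ℝ) ^ d ≤
        (5 * C + (N₀ : ℝ) ^ d * (N₀ : ℝ) ^ (ε / 4) + 1) * (N : ℝ) ^ (-(ε / 4)) := by
      rw [Real.rpow_neg hN0.le, ← div_eq_mul_inv, le_div_iff₀ (by positivity)]
      have : (N : ℝ) ^ d * (N : ℝ) ^ (ε / 4) ≤ (N₀ : ℝ) ^ d * (N₀ : ℝ) ^ (ε / 4) := by gcongr
      linarith
    refine ⟨fun x => ?_, fun x _ => (abs_one_sub_hitMean_div_le V x).trans h1⟩
    linarith [(abs_le.1 (abs_one_sub_hitMean_div_le V x)).1]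

/-- **Proposition (the starting point barely matters for entrance times).**
For `V ⊆ A = B(0,r_N)` nonempty and `f_V(x) = 1 − E_x[H_V]/E[H_V]`:
`inf_x f_V(x) ≥ −c N^{−c'}` and `sup_{x ∉ B} |f_V(x)| ≤ c N^{−c'}`,
where `B = B(0, N^{1−ε/2})`. -/
theorem entrance_time_ratio_bounds
    (d : ℕ) (hd : 3 ≤ d) (ε : ℝ) (hε : 0 < ε ∧ ε < 1) :
    ∃ c c' : ℝ, 0 < c ∧ 0 < c' ∧ ∀ N : ℕ, 2 ≤ N →
      ∀ rN : ℝ, 1 ≤ rN → rN ≤ (N : ℝ) ^ (1 - ε) →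
        ∀ V : Set (Torus d N), V.Nonempty → V ⊆ torusBall (0 : Torus d N) rN →
          ∀ (Px : Torus d N → Measure (CTPath d N)),
            (∀ x, IsCTWalk (Px x) (pointInit x)) →
            ∀ P : Measure (CTPath d N), IsCTWalk P (unifInit d N) →
              (∀ x : Torus d N,
                -(c * (N : ℝ) ^ (-c')) ≤
                  1 - (∫ ω, hitT V ω ∂(Px x)) / (∫ ω, hitT V ω ∂P)) ∧
              (∀ x : Torus d N, x ∉ torusBall (0 : Torus d N) ((N : ℝ) ^ (1 - ε / 2)) →
                |1 - (∫ ω, hitT V ω ∂(Px x)) / (∫ ω, hitT V ω ∂P)| ≤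
                  c * (N : ℝ) ^ (-c')) := by
  obtain ⟨c, hc, h⟩ := hitMean_ratio_bounds d hd hε.1
  refine ⟨c, ε / 4, hc, by linarith [hε.1], fun N hN rN hr1 hr V hV hVr Px hPx P hP => ?_⟩
  have : NeZero N := ⟨by omega⟩
  obtain rfl | hN3 : N = 2 ∨ 3 ≤ N := by omega
  · obtain ⟨μ, ν, hμ, -⟩ := hPx 0
    exact absurd hμ (not_isWalkLaw_pointInit_two (by omega) μ 0)
  · have h1 : ∀ x, ∫ ω, hitT V ω ∂(Px x) = hitMean V x := fun x => by
      rw [(hPx x).integral_hitT (by omega) hN3 hV]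
      simp [pointInit, apply_ite ENNReal.toReal]
    have h2 : ∫ ω, hitT V ω ∂P = (∑ y, hitMean V y) / (N : ℝ) ^ d := by
      rw [hP.integral_hitT (by omega) hN3 hV, Finset.sum_div]
      refine Finset.sum_congr rfl fun x _ => ?_
      simp [unifInit, div_eq_inv_mul]
    simp only [h1, h2]
    exact h N this hN3 rN hr1 hr V hV hVr

end Frag
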